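/- arXiv:2001.07006 — 9 statements merged into one kernel-verified Lean document; each statement's English description precedes it below -/
import Mathlib

section
/- Let A ∈ ℝ^{n×n} and let C_1 ∈ ℝ^{r_1×n}, …, C_N ∈ ℝ^{r_N×n}, with C ∈ ℝ^{(r_1+…+r_N)×n} the vertical stack of C_1,…,C_N. If the pair (A,C) is observable, then there exist an invertible matrix T ∈ ℝ^{n×n} and a partition n = n_1 + … + n_N with n_j ≥ 0 such that, with rows/columns partitioned into blocks of sizes n_1,…,n_N: (i) Ā := T⁻¹AT is block lower triangular, i.e., its (j,q) block A_{jq} is zero whenever q > j; (ii) for each j, C̄_j := C_j T has its q-th column-block equal to zero for every q > j, i.e., C̄_j = [C_{j1} … C_{jj} 0 … 0]; and (iii) for each j ∈ {1,…,N}, the pair (A_{jj}, C_{jj}) is observable, where A_{jj} is the j-th diagonal block of Ā and C_{jj} is the j-th column-block of C̄_j. -/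
/-! The proof is the observability analogue of a flag-adapted basis. Let `U m` be the subspace of
states that sensors `0, …, m - 1` can never distinguish from zero, i.e. those `v` with
`C i * A ^ k * v = 0` for all `i < m` and all `k`. The `U m` are `A`-invariant and decrease from
`U 0 = ⊤` to `U N`, which is `⊥` by observability of the stacked pair
(`observable_iff`). Splitting `U j = W j ⊕ U (j + 1)` and collecting bases of
`W 0, …, W (N - 1)` gives a basis of the whole space adapted to the flag
(`exists_adapted_basis`); its vectors are the columns of `T`.

Invariance of the `U m` makes `T⁻¹ * A * T` block lower triangular, and `C j` kills `U (j + 1)`,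
hence all columns beyond block `j`. For the diagonal pairs, let `Φ x` be the combination of the
block-`j` columns with coefficients `x`. Then `A ^ k * Φ x ≡ Φ (A_jj ^ k * x)` modulo `U (j + 1)`,
so a vector `x` unobservable for `(A_jj, C_jj)` has `Φ x ∈ U (j + 1)`, and since also
`Φ x ∈ W j`, this forces `x = 0`. -/

/-- A pair `(A, C)` (with `A : ℝ^{n×n}` and `C` an `R`-indexed family of row vectors of
length `n`) is *observable* if the stacked observability matrix
`[C; CA; CA²; …; CA^{n−1}]` has rank `n`. -/
def Observable {n : ℕ} {R : Type*} [Fintype R]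
    (A : Matrix (Fin n) (Fin n) ℝ) (C : Matrix R (Fin n) ℝ) : Prop :=
  Matrix.rank (Matrix.of fun (p : Fin n × R) (col : Fin n) => (C * A ^ (p.1 : ℕ)) p.2 col) = n

/-- The rank condition says that no nonzero state is invisible at all times; by Cayley–Hamilton the
powers of `A` below `n` already detect everything. -/
lemma observable_iff {n : ℕ} {R : Type*} [Fintype R]
    (A : Matrix (Fin n) (Fin n) ℝ) (C : Matrix R (Fin n) ℝ) :
    Observable A C ↔ ∀ v : Fin n → ℝ, (∀ k : ℕ, (C * A ^ k).mulVec v = 0) → v = 0 := by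
  set M : Matrix (Fin n × R) (Fin n) ℝ :=
    Matrix.of fun (p : Fin n × R) (col : Fin n) => (C * A ^ (p.1 : ℕ)) p.2 col with hM
  have hrow : ∀ v p, M.mulVec v p = (C * A ^ (p.1 : ℕ)).mulVec v p.2 := fun v p => rfl
  have hker : Observable A C ↔ LinearMap.ker M.mulVecLin = ⊥ := by
    have h1 := LinearMap.finrank_range_add_finrank_ker M.mulVecLin
    rw [Module.finrank_fin_fun] at h1
    have h2 : Observable A C ↔ Module.finrank ℝ (LinearMap.range M.mulVecLin) = n := Iff.rfl
    rw [h2, ← Submodule.finrank_eq_zero]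
    omega
  rw [hker, LinearMap.ker_eq_bot']
  refine forall_congr' fun v => imp_congr_left ?_
  constructor
  · intro h k
    have hlt : ∀ i < n, (C * A ^ i).mulVec v = 0 := fun i hi => by
      ext s
      exact (hrow v (⟨i, hi⟩, s)).symm.trans (congrFun h _)
    rcases Nat.eq_zero_or_pos n with rfl | hn
    · rw [Subsingleton.elim v 0, Matrix.mulVec_zero]
    · have hdeg : (Polynomial.X ^ k %ₘ A.charpoly).natDegree < n := by
        have := Polynomial.natDegree_modByMonic_lt (Polynomial.X ^ k) A.charpoly_monic
          (fun h1 => by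
            have := A.charpoly_natDegree_eq_dim
            rw [h1] at this
            simp at this
            omega)
        rwa [A.charpoly_natDegree_eq_dim, Fintype.card_fin] at this
      rw [Matrix.pow_eq_aeval_mod_charpoly, Polynomial.aeval_eq_sum_range' hdeg,
        Matrix.mul_sum, Matrix.sum_mulVec]
      refine Finset.sum_eq_zero fun i hi => ?_
      rw [Matrix.mul_smul, Matrix.smul_mulVec, hlt i (Finset.mem_range.1 hi), smul_zero]
  · intro h
    ext p
    exact (hrow v p).trans (congrFun (h p.1) p.2)

/-- A decreasing flag `⊤ = U 0 ≥ U 1 ≥ … ≥ U N = ⊥` has an adapted basis: `U m` consists of the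
vectors whose coordinates in the blocks before the `m`-th one vanish. -/
lemma exists_adapted_basis {V : Type*} [AddCommGroup V] [Module ℝ V] [FiniteDimensional ℝ V]
    {N : ℕ} (U : ℕ → Submodule ℝ V) (hU : Antitone U) (h0 : U 0 = ⊤) (hN : U N = ⊥) :
    ∃ (d : Fin N → ℕ) (b : Module.Basis (Σ j : Fin N, Fin (d j)) ℝ V),
      ∀ m v, v ∈ U m ↔ ∀ p : Σ j : Fin N, Fin (d j), (p.1 : ℕ) < m → b.repr v p = 0 := by
  have hW : ∀ m, ∃ W : Submodule ℝ V, Disjoint (U (m + 1)) W ∧ U (m + 1) ⊔ W = U m := by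
    intro m
    obtain ⟨W, hW⟩ := exists_isCompl (U (m + 1))
    refine ⟨W ⊓ U m, hW.disjoint.mono_right inf_le_left, ?_⟩
    rw [← sup_inf_assoc_of_le W (hU m.le_succ), hW.sup_eq_top, top_inf_eq]
  choose W hdisj hsup using hW
  have hWU : ∀ m, W m ≤ U m := fun m => hsup m ▸ le_sup_right
  let d : Fin N → ℕ := fun j => Module.finrank ℝ (W j)
  let w : ∀ j : Fin N, Module.Basis (Fin (d j)) ℝ (W j) := fun j => Module.finBasis ℝ (W j)
  let u : (Σ j : Fin N, Fin (d j)) → V := fun p => (w p.1 p.2 : V)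
  have huW : ∀ p, u p ∈ W p.1 := fun p => (w p.1 p.2).2
  have hspan : ∀ m, m ≤ N → U m ≤ Submodule.span ℝ (u '' {p | m ≤ (p.1 : ℕ)}) := by
    intro m hm
    induction hm using Nat.decreasingInduction with
    | self => rw [hN]; exact bot_le
    | of_succ m hm ih =>
      rw [← hsup m]
      refine sup_le (ih.trans (Submodule.span_mono (Set.image_mono fun p hp => ?_))) ?_
      · exact (Nat.le_succ m).trans hp
      · intro x hx
        have hx' := congrArg Subtype.val ((w ⟨m, hm⟩).sum_repr ⟨x, hx⟩)
        rw [← show _ = x from hx', Submodule.coe_sum]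
        refine Submodule.sum_mem _ fun a _ => ?_
        refine Submodule.smul_mem _ _ (Submodule.subset_span ⟨⟨⟨m, hm⟩, a⟩, ?_, rfl⟩)
        exact le_refl m
  have hli : LinearIndependent ℝ u := by
    rw [Fintype.linearIndependent_iff]
    intro g hg
    rw [Fintype.sum_sigma] at hg
    have key : ∀ m : ℕ, ∀ hm : m < N, ∀ a, g ⟨⟨m, hm⟩, a⟩ = 0 := by
      intro m
      induction m using Nat.strong_induction_on with
      | _ m ih =>
      intro hm
      have hsW : ∀ j : Fin N, ∑ a, g ⟨j, a⟩ • u ⟨j, a⟩ ∈ W j := fun j =>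
        Submodule.sum_mem _ fun a _ => Submodule.smul_mem _ _ (huW ⟨j, a⟩)
      have hsU : ∑ a, g ⟨⟨m, hm⟩, a⟩ • u ⟨⟨m, hm⟩, a⟩ ∈ U (m + 1) := by
        rw [← Finset.add_sum_erase _ _ (Finset.mem_univ (⟨m, hm⟩ : Fin N))] at hg
        rw [eq_neg_of_add_eq_zero_left hg]
        refine Submodule.neg_mem _ (Submodule.sum_mem _ fun j hj => ?_)
        rcases lt_trichotomy (j : ℕ) m with h | h | h
        · rw [Finset.sum_eq_zero fun a _ => by rw [ih j h j.2 a, zero_smul]]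
          exact Submodule.zero_mem _
        · exact absurd (Fin.ext h) (Finset.ne_of_mem_erase hj)
        · exact hU h (hWU _ (hsW j))
      have hs0 := Submodule.disjoint_def.1 (hdisj m) _ hsU (hsW ⟨m, hm⟩)
      refine Fintype.linearIndependent_iff.1 (w ⟨m, hm⟩).linearIndependent _ (Subtype.ext ?_)
      rw [Submodule.coe_sum]
      exact hs0
    exact fun p => key p.1 p.1.2 p.2
  have htop : ⊤ ≤ Submodule.span ℝ (Set.range u) := by
    rw [← h0]
    exact (hspan 0 N.zero_le).trans (Submodule.span_mono (Set.image_subset_range _ _))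
  let b := Module.Basis.mk hli htop
  have hb : ⇑b = u := Module.Basis.coe_mk hli htop
  refine ⟨d, b, fun m v => ⟨fun hv p hp => ?_, fun h => ?_⟩⟩
  · rcases le_total m N with hm | hm
    · have := hspan m hm hv
      rw [← hb, Module.Basis.mem_span_image] at this
      by_contra hne
      exact absurd (this (Finsupp.mem_support_iff.2 hne)) (not_le.2 hp)
    · have : v = 0 := by simpa [hN] using hU hm hv
      simp [this]
  · rw [← b.sum_repr v]
    refine Submodule.sum_mem _ fun p _ => ?_
    rcases lt_or_ge (p.1 : ℕ) m with hp | hp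
    · rw [h p hp, zero_smul]; exact Submodule.zero_mem _
    · refine Submodule.smul_mem _ _ (hU hp (hWU _ ?_))
      rw [hb]; exact huW p

/-- The states on which the outputs of sensors `0, …, m - 1` vanish at all times. -/
def jointUnobs {n N : ℕ} {r : Fin N → ℕ} (A : Matrix (Fin n) (Fin n) ℝ)
    (C : ∀ i : Fin N, Matrix (Fin (r i)) (Fin n) ℝ) (m : ℕ) : Submodule ℝ (Fin n → ℝ) where
  carrier := {v | ∀ i : Fin N, (i : ℕ) < m → ∀ k : ℕ, (C i * A ^ k).mulVec v = 0}
  add_mem' hv hw i hi k := by rw [Matrix.mulVec_add, hv i hi k, hw i hi k, add_zero]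
  zero_mem' i hi k := Matrix.mulVec_zero _
  smul_mem' c v hv i hi k := by rw [Matrix.mulVec_smul, hv i hi k, smul_zero]

lemma mulVec_mem_jointUnobs {n N : ℕ} {r : Fin N → ℕ} {A : Matrix (Fin n) (Fin n) ℝ}
    {C : ∀ i : Fin N, Matrix (Fin (r i)) (Fin n) ℝ} {m : ℕ} {v : Fin n → ℝ}
    (hv : v ∈ jointUnobs A C m) : A.mulVec v ∈ jointUnobs A C m := fun i hi k => by
  rw [Matrix.mulVec_mulVec, Matrix.mul_assoc, ← pow_succ]
  exact hv i hi (k + 1)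

/-- **Multi-sensor observability decomposition** (Lemma 1).
If the pair `(A, C)` is observable, where `C` is the vertical stack of
`C 0, …, C (N-1)`, then there is an invertible matrix `T` and a partition
`n = d 0 + … + d (N-1)` (with the index bijection `e` identifying `Fin n` with the
contiguous blocks of sizes `d 0, …, d (N-1)`) such that `T⁻¹ * A * T` is block
lower triangular, each `C j * T` has vanishing column blocks beyond the `j`-th one,
and every diagonal pair `(A_{jj}, C_{jj})` is observable. -/
theorem multi_sensor_decomposition {n N : ℕ} (r : Fin N → ℕ)
    (A : Matrix (Fin n) (Fin n) ℝ)
    (C : ∀ i : Fin N, Matrix (Fin (r i)) (Fin n) ℝ)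
    (hobs : Observable A
      (Matrix.of fun (p : Σ i : Fin N, Fin (r i)) (col : Fin n) => C p.1 p.2 col)) :
    ∃ (T : Matrix (Fin n) (Fin n) ℝ) (d : Fin N → ℕ)
      (e : (Σ j : Fin N, Fin (d j)) ≃ Fin n),
      IsUnit T.det ∧
      (∑ j : Fin N, d j) = n ∧
      -- `e` realizes the contiguous partition of the index set into blocks of sizes `d j`
      (∀ (j : Fin N) (a : Fin (d j)),
        ((e ⟨j, a⟩ : Fin n) : ℕ) = (∑ q ∈ Finset.univ.filter (fun q => q < j), d q) + (a : ℕ)) ∧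
      -- (i) `Ā := T⁻¹AT` is block lower triangular: the `(j,q)` block vanishes for `q > j`
      (∀ (j q : Fin N), j < q → ∀ (a : Fin (d j)) (b : Fin (d q)),
        (T⁻¹ * A * T) (e ⟨j, a⟩) (e ⟨q, b⟩) = 0) ∧
      -- (ii) `C̄_j := C_j T` has its `q`-th column block vanishing for `q > j`
      (∀ (j q : Fin N), j < q → ∀ (row : Fin (r j)) (b : Fin (d q)),
        (C j * T) row (e ⟨q, b⟩) = 0) ∧
      -- (iii) each diagonal pair `(A_{jj}, C_{jj})` is observable
      (∀ j : Fin N, Observable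
        (Matrix.of fun (a b : Fin (d j)) => (T⁻¹ * A * T) (e ⟨j, a⟩) (e ⟨j, b⟩))
        (Matrix.of fun (row : Fin (r j)) (b : Fin (d j)) => (C j * T) row (e ⟨j, b⟩))) := by
  have hC : ∀ (j : Fin N) (v : Fin n → ℝ), v ∈ jointUnobs A C (j + 1) → (C j).mulVec v = 0 :=
    fun j v hv => by simpa using hv j (Nat.lt_succ_self _) 0
  have hanti : Antitone (jointUnobs A C) := fun a b hab v hv i hi k => hv i (hi.trans_le hab) k
  obtain ⟨d, b, hb⟩ := exists_adapted_basis (N := N) (jointUnobs A C) hanti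
    (eq_top_iff.2 fun v _ i hi => absurd hi (Nat.not_lt_zero _))
    (by
      rw [eq_bot_iff]
      intro v hv
      refine (observable_iff _ _).1 hobs v fun k => ?_
      ext p
      exact congrFun (hv p.1 p.1.2 k) p.2)
  have hbU : ∀ p, b p ∈ jointUnobs A C p.1 := fun p => (hb _ _).2 fun q hq => by
    rw [b.repr_self, Finsupp.single_eq_of_ne (fun h => by rw [h] at hq; exact lt_irrefl _ hq)]
  have hsum : ∑ j, d j = n := by
    have := Module.finrank_eq_card_basis b
    simpa using this.symm
  let e : (Σ j : Fin N, Fin (d j)) ≃ Fin n := finSigmaFinEquiv.trans (finCongr hsum)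
  let T : Matrix (Fin n) (Fin n) ℝ := Matrix.of fun i c => b (e.symm c) i
  have hcol : ∀ {R : Type} (M : Matrix R (Fin n) ℝ) s p, (M * T) s (e p) = M.mulVec (b p) s := by
    intro R M s p
    simp [T, Matrix.mul_apply, Matrix.mulVec, dotProduct]
  have hTunit : IsUnit T := by
    have : T = (Pi.basisFun ℝ (Fin n)).toMatrix (b.reindex e) := by
      ext i c; simp [T, Module.Basis.toMatrix_apply]
    rw [this]
    have := (Pi.basisFun ℝ (Fin n)).invertibleToMatrix (b.reindex e)
    exact isUnit_of_invertible _
  have hT : IsUnit T.det := (Matrix.isUnit_iff_isUnit_det T).1 hTunit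
  -- The entries of `T⁻¹ * A * T` are the coordinates of the images of the basis vectors.
  have hX : ∀ p q, (T⁻¹ * A * T) (e p) (e q) = b.repr (A.mulVec (b q)) p := by
    let X : Matrix (Fin n) (Fin n) ℝ :=
      Matrix.of fun i c => b.repr (A.mulVec (b (e.symm c))) (e.symm i)
    have h1 : T * X = A * T := by
      ext i c
      obtain ⟨q, rfl⟩ := e.surjective c
      rw [hcol, ← b.sum_repr (A.mulVec (b q)), Matrix.mul_apply, ← e.sum_comp, Finset.sum_apply]
      refine Finset.sum_congr rfl fun p _ => ?_
      simp [T, X, mul_comm]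
    intro p q
    rw [Matrix.mul_assoc, ← h1, Matrix.nonsing_inv_mul_cancel_left _ _ hT]
    simp [X]
  refine ⟨T, d, e, hT, hsum, ?_, ?_, ?_, ?_⟩
  · intro j a
    have h1 : ((e ⟨j, a⟩ : Fin n) : ℕ) = ((finSigmaFinEquiv ⟨j, a⟩ : Fin (∑ j, d j)) : ℕ) := rfl
    rw [h1, finSigmaFinEquiv_apply]
    congr 1
    refine Finset.sum_bij (fun i _ => Fin.castLE j.2.le i) ?_ ?_ ?_ ?_
    · intro i _
      exact Finset.mem_filter.2 ⟨Finset.mem_univ _, i.2⟩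
    · intro i _ i' _ h
      simpa using h
    · intro q hq
      exact ⟨⟨q, (Finset.mem_filter.1 hq).2⟩, Finset.mem_univ _, rfl⟩
    · intro i _
      rfl
  · intro j q hjq a c
    rw [hX]
    exact (hb q _).1 (mulVec_mem_jointUnobs (hbU ⟨q, c⟩)) ⟨j, a⟩ hjq
  · intro j q hjq row c
    rw [hcol, hC j _ (hanti (Nat.succ_le_of_lt hjq) (hbU ⟨q, c⟩))]
    rfl
  · intro j
    rw [observable_iff]
    set M : Matrix (Fin (d j)) (Fin (d j)) ℝ :=
      Matrix.of fun a c => (T⁻¹ * A * T) (e ⟨j, a⟩) (e ⟨j, c⟩) with hM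
    set D : Matrix (Fin (r j)) (Fin (d j)) ℝ :=
      Matrix.of fun row c => (C j * T) row (e ⟨j, c⟩) with hD
    intro x hx
    let Φ : (Fin (d j) → ℝ) → (Fin n → ℝ) := fun y => ∑ c, y c • b ⟨j, c⟩
    have hΦU : ∀ y, Φ y ∈ jointUnobs A C j := fun y =>
      Submodule.sum_mem _ fun c _ => Submodule.smul_mem _ _ (hbU ⟨j, c⟩)
    have hΦrepr : ∀ y a, b.repr (Φ y) ⟨j, a⟩ = y a := by
      intro y a
      simp [Φ, Finsupp.single_apply]
    have hDΦ : ∀ y, (C j).mulVec (Φ y) = D.mulVec y := by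
      intro y
      ext s
      simp only [Φ, Matrix.mulVec_sum, Matrix.mulVec_smul, Finset.sum_apply, Pi.smul_apply,
        smul_eq_mul]
      simp only [Matrix.mulVec, dotProduct, hD, Matrix.of_apply]
      refine Finset.sum_congr rfl fun c _ => ?_
      rw [hcol, mul_comm]
      rfl
    have hstep : ∀ y, A.mulVec (Φ y) - Φ (M.mulVec y) ∈ jointUnobs A C (j + 1) := by
      intro y
      rw [hb]
      rintro ⟨i, a⟩ hi
      rcases Nat.lt_succ_iff_lt_or_eq.1 hi with h | h
      · exact (hb j _).1 (Submodule.sub_mem _ (mulVec_mem_jointUnobs (hΦU y)) (hΦU _)) _ h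
      · obtain rfl : i = j := Fin.ext h
        rw [map_sub, Finsupp.sub_apply, hΦrepr, sub_eq_zero]
        simp only [Φ, Matrix.mulVec_sum, Matrix.mulVec_smul, map_sum, map_smul,
          Finsupp.finsetSum_apply, Finsupp.smul_apply, smul_eq_mul]
        simp only [Matrix.mulVec, dotProduct, hM, Matrix.of_apply]
        refine Finset.sum_congr rfl fun c _ => ?_
        rw [hX, mul_comm]
    have hpow : ∀ k : ℕ,
        (A ^ k).mulVec (Φ x) - Φ ((M ^ k).mulVec x) ∈ jointUnobs A C (j + 1) := by
      intro k
      induction k with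
      | zero => simp
      | succ k ih =>
        have := Submodule.add_mem _ (mulVec_mem_jointUnobs ih) (hstep ((M ^ k).mulVec x))
        rw [Matrix.mulVec_sub, sub_add_sub_cancel, Matrix.mulVec_mulVec, Matrix.mulVec_mulVec,
          ← pow_succ', ← pow_succ'] at this
        exact this
    have hmem : Φ x ∈ jointUnobs A C (j + 1) := by
      intro i hi k
      rcases Nat.lt_succ_iff_lt_or_eq.1 hi with h | h
      · exact hΦU x i h k
      · obtain rfl : i = j := Fin.ext h
        have h1 := hC _ _ (hpow k)
        rw [Matrix.mulVec_sub, sub_eq_zero, hDΦ, Matrix.mulVec_mulVec, Matrix.mulVec_mulVec,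
          hx k] at h1
        exact h1
    ext a
    rw [← hΦrepr x a]
    exact (hb _ _).1 hmem ⟨j, a⟩ (Nat.lt_succ_self _)
end

section
/- Suppose (A,C) is observable and the neighbor sequence satisfies conditions (C1)–(C3). Then for every desired rate ρ ∈ (0,1) there exist observer gains L_1,…,L_N (L_j of appropriate dimensions) such that, for every run of Algorithm 1 with these gains (i.e., for every choice of the minimizing neighbors u in the update rules) and every initialization of the estimates, there is a constant c ≥ 0 with ‖x̂_i[k] − x[k]‖ ≤ c ρ^k for all nodes i ∈ {1,…,N} and all k ∈ ℕ. -/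
/-!
Every rate is reached because the gains can be chosen *deadbeat*: observability of
`(A_jj, C_jj)` yields `L_j` with `A_jj - L_j C_jj` nilpotent, and then every error vanishes
identically after finitely many steps. A sequence with finite support is bounded by `c ρ^k`.

*Deadbeat gains* (`exists_deadbeat`). Put `V 0 = ⊤` and `V (k+1) = A (V k ∩ ker C)`. This is a
decreasing chain, and observability says `V n = 0`. A linear map `G` that is a section of `C` on
every `V k` simultaneously (`exists_adapted_section`) gives `L = A G`: for `v ∈ V k` the vector
`v - G C v` lies in `V k ∩ ker C`, so `A - L C` maps `V k` into `V (k+1)` and is nilpotent.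

*Propagation* (`block_error_eventually_zero`). In the block coordinates the errors obey the
recursions of the algorithm without the measurement term. By induction on the block index `j`,
the errors of all lower blocks vanish from some time on; from then on the source error is driven
by the nilpotent matrix alone, hence is zero from some time `K` on. A node whose estimate at time
`K + s` has freshness-index at most `s` got it from the source no earlier than `K`, so its error
is zero. Such nodes form an increasing set that contains the source, and it absorbs
out-neighbors, so condition (C3) forces it to become the set of all nodes
(`freshness_eventually`).
-/

open Finset

/-- The Euclidean norm of a vector in `ℝ^m`. -/
noncomputable def eNorm {m : ℕ} (v : Fin m → ℝ) : ℝ := Real.sqrt (∑ p, v p ^ 2)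

/-- The index of the largest element `t q` of the sequence `𝕀` with `t q ≤ k`. -/
def lastIdx (t : ℕ → ℕ) (k : ℕ) : ℕ := Nat.findGreatest (fun q => t q ≤ k) k

/-- The function `g(k) = f(m(k)) = t_{q+1} − t_q` where `t_q = m(k)` is the largest element
of `𝕀` not exceeding `k`. -/
def gfun (t : ℕ → ℕ) (k : ℕ) : ℕ := t (lastIdx t k + 1) - t (lastIdx t k)

/-! ### Deadbeat observer gains -/

/-- A linear map that is a section of `f` compatible with a whole finite decreasing filtration:
for every `k`, it sends `f (V k)` into `V k`. -/
lemma exists_adapted_section {X Y : Type*} [AddCommGroup X] [Module ℝ X]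
    [AddCommGroup Y] [Module ℝ Y] (f : X →ₗ[ℝ] Y) (V : ℕ → Submodule ℝ X) (hV : Antitone V)
    (n : ℕ) (hn : V n = ⊥) :
    ∃ G : Y →ₗ[ℝ] X, ∀ k, ∀ v ∈ V k, G (f v) ∈ V k ∧ f (G (f v)) = f v := by
  -- Descending induction along the filtration, from `V n = ⊥` up to `V 0`.
  have key : ∀ m, ∃ G : Y →ₗ[ℝ] X, ∀ k, n ≤ k + m → ∀ v ∈ V k,
      G (f v) ∈ V k ∧ f (G (f v)) = f v := by
    intro m
    induction m with
    | zero =>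
      refine ⟨0, fun k hk v hv => ?_⟩
      have h0 : v = 0 := by
        have := hV (show n ≤ k by omega) hv
        rwa [hn, Submodule.mem_bot] at this
      subst h0
      simp
    | succ m ih =>
      obtain ⟨G, hG⟩ := ih
      by_cases hm : n ≤ m
      · exact ⟨G, fun k _ v hv => hG k (by omega) v hv⟩
      -- The filtration level at which the section is extended.
      obtain ⟨k0, hk0⟩ : ∃ k0, n = k0 + (m + 1) := ⟨n - (m + 1), by omega⟩
      -- A projection `P` onto `f (V (k0 + 1))` ...
      obtain ⟨W, hW⟩ := Submodule.exists_isCompl ((V (k0 + 1)).map f)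
      obtain ⟨P, hP1, hP2⟩ : ∃ P : Y →ₗ[ℝ] Y, (∀ y, P y ∈ (V (k0 + 1)).map f) ∧
          ∀ y ∈ (V (k0 + 1)).map f, P y = y :=
        ⟨(Submodule.subtype _).comp (Submodule.projectionOnto _ W hW),
          fun y => (Submodule.projectionOnto _ W hW y).2,
          fun y hy =>
            congrArg Subtype.val (Submodule.projectionOnto_apply_left hW ⟨y, hy⟩)⟩
      -- ... and a section `H` of `f` over `f (V k0)`.
      obtain ⟨H, hH⟩ : ∃ H : Y →ₗ[ℝ] X, ∀ y ∈ (V k0).map f, H y ∈ V k0 ∧ f (H y) = y := by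
        let g : V k0 →ₗ[ℝ] (V k0).map f := f.submoduleMap (V k0)
        have hg : LinearMap.range g = ⊤ :=
          LinearMap.range_eq_top.2 (LinearMap.submoduleMap_surjective f (V k0))
        obtain ⟨h, hh⟩ := g.exists_rightInverse_of_surjective hg
        obtain ⟨H, hH⟩ := LinearMap.exists_extend ((V k0).subtype.comp h)
        refine ⟨H, fun y hy => ?_⟩
        have e1 : H y = h ⟨y, hy⟩ := by
          simpa using LinearMap.congr_fun hH ⟨y, hy⟩
        have e2 : f (h ⟨y, hy⟩ : X) = y := by
          simpa [g] using congrArg Subtype.val (LinearMap.congr_fun hh ⟨y, hy⟩)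
        rw [e1]
        exact ⟨(h ⟨y, hy⟩).2, e2⟩
      refine ⟨G.comp P + H.comp (LinearMap.id - P), fun k hk v hv => ?_⟩
      simp only [LinearMap.add_apply, LinearMap.comp_apply, LinearMap.sub_apply,
        LinearMap.id_apply]
      rcases Nat.lt_or_ge k0 k with hlt | hge
      · have hmem : f v ∈ (V (k0 + 1)).map f :=
          Submodule.mem_map_of_mem (hV (show k0 + 1 ≤ k by omega) hv)
        rw [hP2 _ hmem]
        simpa using hG k (by omega) v hv
      · have hk' : k = k0 := by omega
        subst hk'
        obtain ⟨w, hw, hwP⟩ := hP1 (f v)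
        have hGw := hG (k + 1) (by omega) w hw
        rw [hwP] at hGw
        have hPm : P (f v) ∈ (V k).map f := by
          rw [← hwP]
          exact Submodule.mem_map_of_mem (hV (Nat.le_succ k) hw)
        have hd : f v - P (f v) ∈ (V k).map f :=
          Submodule.sub_mem _ (Submodule.mem_map_of_mem hv) hPm
        have hHd := hH _ hd
        refine ⟨Submodule.add_mem _ (hV (Nat.le_succ k) hGw.1) hHd.1, ?_⟩
        rw [map_add, hGw.2, hHd.2]
        abel
  obtain ⟨G, hG⟩ := key n
  exact ⟨G, fun k => hG k (by omega)⟩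

/-- A state of an observable pair that is invisible in the first `n` outputs is zero. -/
lemma Observable.eq_zero {n : ℕ} {R : Type*} [Fintype R]
    {A : Matrix (Fin n) (Fin n) ℝ} {C : Matrix R (Fin n) ℝ} (h : Observable A C)
    (v : Fin n → ℝ) (hv : ∀ i < n, C.mulVec ((A ^ i).mulVec v) = 0) : v = 0 := by
  unfold Observable at h
  set M := Matrix.of fun (p : Fin n × R) (col : Fin n) => (C * A ^ (p.1 : ℕ)) p.2 col with hM
  have hk : LinearMap.ker M.mulVecLin = ⊥ := by
    have h1 := LinearMap.finrank_range_add_finrank_ker M.mulVecLin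
    have h2 : Module.finrank ℝ (LinearMap.range M.mulVecLin) = n := h
    rw [h2, Module.finrank_fin_fun] at h1
    exact Submodule.finrank_eq_zero.1 (by omega)
  have : v ∈ LinearMap.ker M.mulVecLin := by
    rw [LinearMap.mem_ker, Matrix.mulVecLin_apply]
    funext p
    have := congrFun (hv p.1 p.1.2) p.2
    rw [Matrix.mulVec_mulVec] at this
    simpa [M, Matrix.mulVec, dotProduct] using this
  rw [hk] at this
  simpa using this

/-- The states reachable at time `k` along trajectories with zero output at times `< k`. -/
def silentReach {X Y : Type*} [AddCommGroup X] [Module ℝ X] [AddCommGroup Y] [Module ℝ Y]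
    (a : X →ₗ[ℝ] X) (c : X →ₗ[ℝ] Y) : ℕ → Submodule ℝ X
  | 0 => ⊤
  | k + 1 => (silentReach a c k ⊓ LinearMap.ker c).map a

lemma silentReach_antitone {X Y : Type*} [AddCommGroup X] [Module ℝ X] [AddCommGroup Y]
    [Module ℝ Y] (a : X →ₗ[ℝ] X) (c : X →ₗ[ℝ] Y) : Antitone (silentReach a c) := by
  refine antitone_nat_of_succ_le fun k => ?_
  induction k with
  | zero => exact le_top
  | succ k ih => exact Submodule.map_mono (inf_le_inf_right _ ih)

lemma exists_of_mem_silentReach {X Y : Type*} [AddCommGroup X] [Module ℝ X] [AddCommGroup Y]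
    [Module ℝ Y] (a : X →ₗ[ℝ] X) (c : X →ₗ[ℝ] Y) (k : ℕ) :
    ∀ v ∈ silentReach a c k, ∃ w, v = (a ^ k) w ∧ ∀ i < k, c ((a ^ i) w) = 0 := by
  induction k with
  | zero => exact fun v _ => ⟨v, by simp, by simp⟩
  | succ k ih =>
    rintro v ⟨u, ⟨hu, huc⟩, rfl⟩
    obtain ⟨w, rfl, hw⟩ := ih u hu
    refine ⟨w, by rw [pow_succ']; rfl, fun i hi => ?_⟩
    rcases Nat.lt_succ_iff_lt_or_eq.1 hi with h | rfl
    · exact hw i h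
    · exact huc

/-- An observable pair admits a gain making the error dynamics nilpotent. -/
lemma exists_deadbeat {n r : ℕ} (A : Matrix (Fin n) (Fin n) ℝ) (C : Matrix (Fin r) (Fin n) ℝ)
    (h : Observable A C) :
    ∃ L : Matrix (Fin n) (Fin r) ℝ, (A - L * C) ^ n = 0 := by
  set a := Matrix.toLin' A with ha
  set c := Matrix.toLin' C with hc
  have hbot : silentReach a c n = ⊥ := by
    rw [eq_bot_iff]
    intro v hv
    obtain ⟨w, rfl, hw⟩ := exists_of_mem_silentReach a c n v hv
    have : w = 0 := h.eq_zero w fun i hi => by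
      have := hw i hi
      rwa [ha, hc, ← Matrix.toLin'_pow, Matrix.toLin'_apply, Matrix.toLin'_apply] at this
    simp [this]
  obtain ⟨G, hG⟩ := exists_adapted_section c (silentReach a c) (silentReach_antitone a c) n hbot
  refine ⟨LinearMap.toMatrix' (a.comp G), ?_⟩
  set F := a - (a.comp G).comp c with hF
  have hFm : Matrix.toLin' (A - LinearMap.toMatrix' (a.comp G) * C) = F := by
    rw [map_sub, Matrix.toLin'_mul, Matrix.toLin'_toMatrix']
  have hstep : ∀ k, ∀ v ∈ silentReach a c k, F v ∈ silentReach a c (k + 1) := by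
    intro k v hv
    obtain ⟨h1, h2⟩ := hG k v hv
    refine ⟨v - G (c v), ⟨Submodule.sub_mem _ hv h1, ?_⟩, by simp [hF]⟩
    simp [h2]
  have hpow : ∀ k v, (F ^ k) v ∈ silentReach a c k := by
    intro k
    induction k with
    | zero => exact fun v => trivial
    | succ k ih =>
      intro v
      rw [pow_succ']
      exact hstep k _ (ih v)
  apply Matrix.toLin'.injective
  rw [Matrix.toLin'_pow, hFm, map_zero]
  ext1 v
  ext1
  have := hpow n (Pi.single v 1)
  rw [hbot, Submodule.mem_bot] at this
  simp [this]

/-! ### Freshness-indices and error propagation -/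

/-- After any time `K`, all nodes eventually hold information dating from no earlier than
`K`. -/
lemma freshness_eventually {N : ℕ} (Nbrs : Fin N → ℕ → Set (Fin N)) (t : ℕ → ℕ)
    (htmono : StrictMono t)
    (hC3 : ∀ q, ∀ a b : Fin N,
      Relation.ReflTransGen
        (fun l i => ∃ τ, t q ≤ τ ∧ τ < t (q + 1) ∧ l ∈ Nbrs i τ) a b)
    (src : Fin N) (τ : Fin N → ℕ → ℕ∞) (hsrc : ∀ k, τ src k = 0)
    (hself : ∀ i k, τ i (k + 1) ≤ τ i k + 1)
    (hnbr : ∀ i k, ∀ l ∈ Nbrs i k, τ i (k + 1) ≤ τ l k + 1) (K : ℕ) :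
    ∃ s₀, ∀ s ≥ s₀, ∀ i, τ i (K + s) ≤ (s : ℕ∞) := by
  have hmono : ∀ i s s', s ≤ s' → τ i (K + s) ≤ (s : ℕ∞) → τ i (K + s') ≤ (s' : ℕ∞) := by
    intro i s s' hs h
    induction s', hs using Nat.le_induction with
    | base => exact h
    | succ m _ ih =>
      calc τ i (K + (m + 1)) ≤ τ i (K + m) + 1 := hself i (K + m)
        _ ≤ m + 1 := by gcongr
        _ = ((m + 1 : ℕ) : ℕ∞) := by push_cast; rfl
  classical
  -- A time by which every node that is ever fresh has become so.
  obtain ⟨s₁, hs₁⟩ : ∃ s₁, ∀ i, (∃ s : ℕ, τ i (K + s) ≤ (s : ℕ∞)) →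
      τ i (K + s₁) ≤ (s₁ : ℕ∞) := by
    choose! φ hφ using fun (i : Fin N) (h : ∃ s : ℕ, τ i (K + s) ≤ (s : ℕ∞)) => h
    exact ⟨Finset.univ.sup φ, fun i hi =>
      hmono i _ _ (Finset.le_sup (Finset.mem_univ i)) (hφ i hi)⟩
  refine ⟨s₁, fun s hs i => hmono i s₁ s hs (hs₁ i ?_)⟩
  have hq : K + s₁ ≤ t (K + s₁) := htmono.le_apply
  induction hC3 (K + s₁) src i with
  | refl => exact ⟨0, by simp [hsrc]⟩
  | @tail l i' _ hli ih =>
    obtain ⟨σ, hσ, _, hl⟩ := hli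
    obtain ⟨s', rfl⟩ : ∃ s', σ = K + s' := ⟨σ - K, by omega⟩
    have := hmono l s₁ s' (by omega) (hs₁ l ih)
    refine ⟨s' + 1, ?_⟩
    calc τ i' (K + (s' + 1)) ≤ τ l (K + s') + 1 := hnbr i' (K + s') l hl
      _ ≤ s' + 1 := by gcongr
      _ = ((s' + 1 : ℕ) : ℕ∞) := by push_cast; rfl

/-- For a single block `j = src`: once the coupling terms `b i k` coming from lower blocks vanish,
deadbeat dynamics `F` at the source make the error of every node vanish after finite time. -/
lemma block_error_eventually_zero {N m : ℕ} (Nbrs : Fin N → ℕ → Set (Fin N)) (t : ℕ → ℕ)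
    (htmono : StrictMono t)
    (hC3 : ∀ q, ∀ a b : Fin N,
      Relation.ReflTransGen
        (fun l i => ∃ τ, t q ≤ τ ∧ τ < t (q + 1) ∧ l ∈ Nbrs i τ) a b)
    (src : Fin N) (τ : Fin N → ℕ → ℕ∞) (hsrc : ∀ k, τ src k = 0)
    (htop : ∀ i, i ≠ src → τ i 0 = ⊤)
    (A F : Matrix (Fin m) (Fin m) ℝ) (hF : F ^ m = 0)
    (err b : Fin N → ℕ → Fin m → ℝ)
    (herrsrc : ∀ k, err src (k + 1) = F.mulVec (err src k) + b src k)
    (hstep : ∀ i, i ≠ src → ∀ k,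
      (sInf ((fun l => τ l k) '' Nbrs i k) < τ i k →
        ∃ u ∈ Nbrs i k, τ u k = sInf ((fun l => τ l k) '' Nbrs i k) ∧
          τ i (k + 1) = τ u k + 1 ∧ err i (k + 1) = A.mulVec (err u k) + b i k) ∧
      (¬ sInf ((fun l => τ l k) '' Nbrs i k) < τ i k →
        τ i (k + 1) = τ i k + 1 ∧ err i (k + 1) = A.mulVec (err i k) + b i k))
    (K : ℕ) (hb : ∀ k ≥ K, ∀ i, b i k = 0) :
    ∃ K', ∀ k ≥ K', ∀ i, err i k = 0 := by
  have hnbr : ∀ i k, ∀ l ∈ Nbrs i k, τ i (k + 1) ≤ τ l k + 1 := by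
    intro i k l hl
    by_cases hi : i = src
    · subst hi; simp [hsrc]
    have hle : sInf ((fun l => τ l k) '' Nbrs i k) ≤ τ l k := sInf_le ⟨l, hl, rfl⟩
    by_cases hlt : sInf ((fun l => τ l k) '' Nbrs i k) < τ i k
    · obtain ⟨u, _, hu, h1, _⟩ := (hstep i hi k).1 hlt
      rw [h1, hu]
      gcongr
    · rw [((hstep i hi k).2 hlt).1]
      gcongr
      exact (not_lt.1 hlt).trans hle
  have hself : ∀ i k, τ i (k + 1) ≤ τ i k + 1 := by
    intro i k
    by_cases hi : i = src
    · subst hi; simp [hsrc]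
    by_cases hlt : sInf ((fun l => τ l k) '' Nbrs i k) < τ i k
    · obtain ⟨u, _, hu, h1, _⟩ := (hstep i hi k).1 hlt
      rw [h1, hu]
      gcongr
    · rw [((hstep i hi k).2 hlt).1]
  -- Freshness-index zero is reserved for the source.
  have hne : ∀ i, i ≠ src → ∀ k, τ i k ≠ 0 := by
    intro i hi k
    cases k with
    | zero => simp [htop i hi]
    | succ k =>
      by_cases hlt : sInf ((fun l => τ l k) '' Nbrs i k) < τ i k
      · obtain ⟨u, _, _, h1, _⟩ := (hstep i hi k).1 hlt
        simp [h1]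
      · simp [((hstep i hi k).2 hlt).1]
  have hsrc0 : ∀ k ≥ K + m, err src k = 0 := by
    have hp : ∀ s, err src (K + s) = (F ^ s).mulVec (err src K) := by
      intro s
      induction s with
      | zero => simp
      | succ s ih =>
        rw [← add_assoc, herrsrc, hb _ (by omega), ih, add_zero, Matrix.mulVec_mulVec,
          ← pow_succ']
    intro k hk
    obtain ⟨s, rfl⟩ : ∃ s, k = K + (m + s) := ⟨k - K - m, by omega⟩
    rw [hp, pow_add, hF]
    simp
  have hfresh : ∀ s i, τ i (K + m + s) ≤ (s : ℕ∞) → err i (K + m + s) = 0 := by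
    intro s
    induction s with
    | zero =>
      intro i h
      by_cases hi : i = src
      · subst hi; exact hsrc0 _ (by omega)
      · exact absurd (by simpa using h) (hne i hi _)
    | succ s ih =>
      intro i h
      by_cases hi : i = src
      · subst hi; exact hsrc0 _ (by omega)
      rw [← add_assoc] at h ⊢
      have hcancel : ∀ y : ℕ∞, y + 1 ≤ ((s + 1 : ℕ) : ℕ∞) → y ≤ s := fun y hy => by
        rw [Nat.cast_succ] at hy
        exact (ENat.add_le_add_iff_right ENat.one_ne_top).1 hy
      by_cases hlt : sInf ((fun l => τ l (K + m + s)) '' Nbrs i (K + m + s)) < τ i (K + m + s)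
      · obtain ⟨u, _, _, h1, h2⟩ := (hstep i hi _).1 hlt
        rw [h2, hb _ (by omega), ih u (hcancel _ (h1 ▸ h))]
        simp
      · obtain ⟨h1, h2⟩ := (hstep i hi _).2 hlt
        rw [h2, hb _ (by omega), ih i (hcancel _ (h1 ▸ h))]
        simp
  obtain ⟨s₀, hs₀⟩ := freshness_eventually Nbrs t htmono hC3 src τ hsrc hself hnbr (K + m)
  refine ⟨K + m + s₀, fun k hk i => ?_⟩
  obtain ⟨s, rfl⟩ : ∃ s, k = K + m + s := ⟨k - (K + m), by omega⟩
  exact hfresh s i (hs₀ s (by omega) i)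

/-! ### Block coordinates -/

lemma sum_lower_triangular {N : ℕ} {M : Type*} [AddCommMonoid M] (j : Fin N) (F : Fin N → M)
    (hF : ∀ q, j < q → F q = 0) :
    ∑ q, F q = F j + ∑ q ∈ Finset.univ.filter (fun q => q < j), F q := by
  rw [← Finset.sum_insert (by simp)]
  symm
  apply Finset.sum_subset (Finset.subset_univ _)
  intro q _ hq
  simp only [Finset.mem_insert, Finset.mem_filter, Finset.mem_univ, true_and, not_or,
    not_lt] at hq
  exact hF q (lt_of_le_of_ne hq.2 (Ne.symm hq.1))

/-- Matrix-vector product in block coordinates, restricted to one block row. -/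
lemma mulVec_block {n N m : ℕ} {d : Fin N → ℕ} (e : (Σ j : Fin N, Fin (d j)) ≃ Fin n)
    {R : Type*} (M : Matrix R (Fin n) ℝ) (row : Fin m → R)
    (B : ∀ q : Fin N, Matrix (Fin m) (Fin (d q)) ℝ)
    (hB : ∀ q a b, B q a b = M (row a) (e ⟨q, b⟩)) (z : Fin n → ℝ) :
    (fun a => M.mulVec z (row a)) = ∑ q, (B q).mulVec (fun b => z (e ⟨q, b⟩)) := by
  funext a
  rw [Finset.sum_apply]
  simp only [Matrix.mulVec, dotProduct, hB]
  rw [← e.sum_comp, Fintype.sum_sigma]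

/-- **Theorem 1**: under joint observability and the communication conditions (C1)–(C3),
for every rate `ρ ∈ (0,1)` the observer gains can be chosen so that every run of
Algorithm 1 tracks the state exponentially fast at rate `ρ`. -/
theorem algorithm1_exponential_convergence
    -- system and measurements
    {n N : ℕ} (hN : 0 < N)
    (A : Matrix (Fin n) (Fin n) ℝ)
    (r : Fin N → ℕ) (C : ∀ i : Fin N, Matrix (Fin (r i)) (Fin n) ℝ)
    (x : ℕ → (Fin n → ℝ)) (hx : ∀ k, x (k + 1) = A.mulVec (x k))
    (hobs : Observable A
      (Matrix.of fun (p : Σ i : Fin N, Fin (r i)) (col : Fin n) => C p.1 p.2 col))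
    -- communication graph sequence: `Nbrs i k` is the in-neighbor set of node `i` at time `k`
    (Nbrs : Fin N → ℕ → Set (Fin N)) (hNbrs : ∀ i k, i ∉ Nbrs i k)
    -- the sequence 𝕀 = {t 0 = 0 < t 1 < t 2 < …}
    (t : ℕ → ℕ) (ht0 : t 0 = 0) (htmono : StrictMono t)
    -- (C1): f(t_q) := t_{q+1} − t_q is nondecreasing in q
    (hC1 : ∀ q, t (q + 1) - t q ≤ t (q + 2) - t (q + 1))
    -- (C2): limsup_{k→∞} 2(N−1)g(k)/k = δ < 1
    (hC2 : ∃ δ : ℝ, δ < 1 ∧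
      Filter.limsup (fun k : ℕ => (2 * (N - 1 : ℝ) * (gfun t k : ℝ)) / (k : ℝ))
        Filter.atTop = δ)
    -- (C3): the union graph over each interval [t_q, t_{q+1}) is strongly connected
    (hC3 : ∀ q, ∀ a b : Fin N,
      Relation.ReflTransGen
        (fun l i => ∃ τ, t q ≤ τ ∧ τ < t (q + 1) ∧ l ∈ Nbrs i τ) a b)
    -- the multi-sensor observability decomposition: an invertible `T`,
    -- block sizes `d j` with index identification `e`
    (T : Matrix (Fin n) (Fin n) ℝ) (hT : IsUnit T.det)
    (d : Fin N → ℕ) (e : (Σ j : Fin N, Fin (d j)) ≃ Fin n)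
    -- block entries of `Ā = T⁻¹AT` and `C̄_j = C_j T`
    (Ablk : ∀ j q : Fin N, Matrix (Fin (d j)) (Fin (d q)) ℝ)
    (Cblk : ∀ j q : Fin N, Matrix (Fin (r j)) (Fin (d q)) ℝ)
    (hAblk : ∀ (j q : Fin N) (a : Fin (d j)) (b : Fin (d q)),
      Ablk j q a b = (T⁻¹ * A * T) (e ⟨j, a⟩) (e ⟨q, b⟩))
    (hCblk : ∀ (j q : Fin N) (row : Fin (r j)) (b : Fin (d q)),
      Cblk j q row b = (C j * T) row (e ⟨q, b⟩))
    -- `Ā` is block lower triangular and `C̄_j = [C_{j1} … C_{jj} 0 … 0]`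
    (hAlow : ∀ j q : Fin N, j < q → Ablk j q = 0)
    (hClow : ∀ j q : Fin N, j < q → Cblk j q = 0)
    -- each diagonal pair is observable
    (hblkobs : ∀ j : Fin N, Observable (Ablk j j) (Cblk j j)) :
    -- conclusion: for every ρ ∈ (0,1) there exist gains L such that every run of
    -- Algorithm 1 converges exponentially at rate ρ
    ∀ ρ : ℝ, 0 < ρ → ρ < 1 →
    ∃ L : ∀ j : Fin N, Matrix (Fin (d j)) (Fin (r j)) ℝ,
      ∀ (τ : Fin N → Fin N → ℕ → ℕ∞)
        (zhat : ∀ (_ : Fin N) (j : Fin N), ℕ → (Fin (d j) → ℝ)),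
        -- source node: zero freshness-index and Luenberger-type update
        (∀ j : Fin N, ∀ k, τ j j k = 0) →
        (∀ j : Fin N, ∀ k, zhat j j (k + 1) =
          (Ablk j j - L j * Cblk j j).mulVec (zhat j j k)
          + ∑ q ∈ Finset.univ.filter (fun q => q < j),
              (Ablk j q - L j * Cblk j q).mulVec (zhat j q k)
          + (L j).mulVec ((C j).mulVec (x k))) →
        -- non-source nodes: initialization and freshness-index based updates
        (∀ i j : Fin N, i ≠ j → τ i j 0 = ⊤) →
        (∀ i j : Fin N, i ≠ j → ∀ k,
          (sInf ((fun l => τ l j k) '' Nbrs i k) < τ i j k →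
            ∃ u ∈ Nbrs i k,
              τ u j k = sInf ((fun l => τ l j k) '' Nbrs i k) ∧
              τ i j (k + 1) = τ u j k + 1 ∧
              zhat i j (k + 1) = (Ablk j j).mulVec (zhat u j k)
                + ∑ q ∈ Finset.univ.filter (fun q => q < j),
                    (Ablk j q).mulVec (zhat i q k)) ∧
          (¬ sInf ((fun l => τ l j k) '' Nbrs i k) < τ i j k →
            τ i j (k + 1) = τ i j k + 1 ∧
            zhat i j (k + 1) = (Ablk j j).mulVec (zhat i j k)
              + ∑ q ∈ Finset.univ.filter (fun q => q < j),
                  (Ablk j q).mulVec (zhat i q k))) →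
        -- conclusion: with x̂_i[k] = T ẑ_i[k], the error decays at rate ρ
        ∃ c : ℝ, 0 ≤ c ∧ ∀ (i : Fin N) (k : ℕ),
          eNorm (fun p =>
            (T.mulVec (fun p' => zhat i (e.symm p').1 k (e.symm p').2)) p - x k p)
            ≤ c * ρ ^ k := by
  classical
  intro ρ hρ0 hρ1
  choose L hL using fun j => exists_deadbeat (Ablk j j) (Cblk j j) (hblkobs j)
  refine ⟨L, fun τ zhat hτsrc hzsrc hτtop hupd => ?_⟩
  -- The true state in block coordinates, and the block errors.
  set z : ℕ → Fin n → ℝ := fun k => T⁻¹.mulVec (x k) with hz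
  have hTz : ∀ k, T.mulVec (z k) = x k := fun k => by
    simp [hz, Matrix.mulVec_mulVec, Matrix.mul_nonsing_inv T hT]
  set zb : ∀ j : Fin N, ℕ → Fin (d j) → ℝ := fun j k a => z k (e ⟨j, a⟩) with hzb
  have hzb_succ : ∀ j k, zb j (k + 1) = (Ablk j j).mulVec (zb j k)
      + ∑ q ∈ Finset.univ.filter (fun q => q < j), (Ablk j q).mulVec (zb q k) := by
    intro j k
    rw [← sum_lower_triangular j (fun q => (Ablk j q).mulVec (zb q k))
      (fun q hq => by simp [hAlow j q hq]),
      ← mulVec_block e (T⁻¹ * A * T) (fun a => e ⟨j, a⟩) (Ablk j) (hAblk j) (z k)]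
    funext a
    simp only [hzb]
    rw [← Matrix.mulVec_mulVec, hTz, ← Matrix.mulVec_mulVec, ← hx]
  have hout : ∀ j k, (C j).mulVec (x k) = (Cblk j j).mulVec (zb j k)
      + ∑ q ∈ Finset.univ.filter (fun q => q < j), (Cblk j q).mulVec (zb q k) := by
    intro j k
    rw [← sum_lower_triangular j (fun q => (Cblk j q).mulVec (zb q k))
      (fun q hq => by simp [hClow j q hq]),
      ← mulVec_block e (C j * T) id (Cblk j) (hCblk j) (z k), ← hTz k, Matrix.mulVec_mulVec]
    rfl
  set err : Fin N → ∀ j : Fin N, ℕ → Fin (d j) → ℝ := fun i j k => zhat i j k - zb j k with herr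
  -- Induction on the block index: every block error vanishes after finite time.
  have hzero : ∀ j : Fin N, ∃ K, ∀ k ≥ K, ∀ i, err i j k = 0 := by
    intro j
    induction j using WellFoundedLT.induction with
    | ind j ih =>
      choose! κ hκ using ih
      refine block_error_eventually_zero Nbrs t htmono hC3 j (fun i k => τ i j k) (hτsrc j)
        (fun i hi => hτtop i j hi) (Ablk j j) (Ablk j j - L j * Cblk j j) (hL j)
        (fun i k => err i j k)
        (fun i k => if i = j then
          ∑ q ∈ Finset.univ.filter (fun q => q < j),
            (Ablk j q - L j * Cblk j q).mulVec (err i q k)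
          else ∑ q ∈ Finset.univ.filter (fun q => q < j), (Ablk j q).mulVec (err i q k))
        ?_ ?_ (Finset.univ.sup κ) ?_
      · intro k
        simp only [herr, if_true, hzsrc, hzb_succ, hout, Matrix.mulVec_sub, Matrix.sub_mulVec,
          Matrix.mulVec_add, Matrix.mulVec_sum, Matrix.mulVec_mulVec, Finset.sum_sub_distrib]
        abel
      · have hcomb : ∀ i u k, (Ablk j j).mulVec (zhat u j k)
            + ∑ q ∈ Finset.univ.filter (fun q => q < j), (Ablk j q).mulVec (zhat i q k)
            - zb j (k + 1) = (Ablk j j).mulVec (err u j k)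
            + ∑ q ∈ Finset.univ.filter (fun q => q < j), (Ablk j q).mulVec (err i q k) := by
          intro i u k
          simp only [herr, hzb_succ, Matrix.mulVec_sub, Finset.sum_sub_distrib]
          abel
        intro i hi k
        simp only [if_neg hi]
        refine ⟨fun hlt => ?_, fun hlt => ?_⟩
        · obtain ⟨u, hu, h1, h2, h3⟩ := (hupd i j hi k).1 hlt
          exact ⟨u, hu, h1, h2, by rw [← hcomb, ← h3]⟩
        · obtain ⟨h2, h3⟩ := (hupd i j hi k).2 hlt
          exact ⟨h2, by rw [← hcomb, ← h3]⟩
      · intro k hk i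
        have h0 : ∀ q ∈ Finset.univ.filter (fun q => q < j), err i q k = 0 := by
          intro q hq
          exact hκ q (Finset.mem_filter.1 hq).2 k
            ((Finset.le_sup (Finset.mem_univ q)).trans hk) i
        show (if i = j then _ else _) = _
        split_ifs
        · exact Finset.sum_eq_zero fun q hq => by rw [h0 q hq, Matrix.mulVec_zero]
        · exact Finset.sum_eq_zero fun q hq => by rw [h0 q hq, Matrix.mulVec_zero]
  choose κ hκ using hzero
  set E : Fin N → ℕ → ℝ := fun i k => eNorm (fun p =>
    (T.mulVec (fun p' => zhat i (e.symm p').1 k (e.symm p').2)) p - x k p) with hE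
  have hEnn : ∀ i k, 0 ≤ E i k := fun i k => Real.sqrt_nonneg _
  have hE0 : ∀ i, ∀ k ≥ Finset.univ.sup κ, E i k = 0 := by
    intro i k hk
    have hzz : (fun p' => zhat i (e.symm p').1 k (e.symm p').2) = z k := by
      funext p
      have h1 := congrFun (hκ (e.symm p).1 k
        ((Finset.le_sup (Finset.mem_univ _)).trans hk) i) (e.symm p).2
      simpa [herr, hzb, sub_eq_zero] using h1
    simp only [hE]
    rw [hzz, hTz]
    simp [eNorm]
  have hterm : ∀ i k, 0 ≤ E i k / ρ ^ k := fun i k => div_nonneg (hEnn i k) (pow_nonneg hρ0.le k)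
  -- Only finitely many errors are nonzero, so their rescaled sum serves as the constant.
  refine ⟨∑ i, ∑ k ∈ Finset.range (Finset.univ.sup κ), E i k / ρ ^ k,
    Finset.sum_nonneg fun i _ => Finset.sum_nonneg fun k _ => hterm i k, fun i k => ?_⟩
  change E i k ≤ _
  rw [← div_le_iff₀ (pow_pos hρ0 k)]
  rcases Nat.lt_or_ge k (Finset.univ.sup κ) with hk | hk
  · calc E i k / ρ ^ k ≤ ∑ k ∈ Finset.range (Finset.univ.sup κ), E i k / ρ ^ k :=
          Finset.single_le_sum (f := fun k => E i k / ρ ^ k) (fun k _ => hterm i k)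
            (Finset.mem_range.2 hk)
      _ ≤ _ := Finset.single_le_sum
          (f := fun i => ∑ k ∈ Finset.range (Finset.univ.sup κ), E i k / ρ ^ k)
          (fun i _ => Finset.sum_nonneg fun k _ => hterm i k) (Finset.mem_univ i)
  · rw [hE0 i k hk, zero_div]
    exact Finset.sum_nonneg fun i _ => Finset.sum_nonneg fun k _ => hterm i k
end

section
/- Suppose (A,C) is observable, the neighbor sequence satisfies conditions (C1)–(C3), and additionally f(t_q) ≤ T' for all t_q ∈ 𝕀, where T' ∈ ℕ_+. Then there exist observer gains L_1,…,L_N such that, for every run of Algorithm 1 with these gains (i.e., for every choice of the minimizing neighbors u in the update rules) and every initialization of the estimates, x̂_i[k] = x[k] for all nodes i ∈ {1,…,N} and all k ≥ n + 2N(N−1)T'. -/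
/-!
Each diagonal block `(A_jj, C_jj)` is observable, so it admits a dead-beat gain `L_j`, one with
`(A_jj - L_j C_jj) ^ d_j = 0` (`Observable.exists_gain`). With these gains the blocks are recovered
one after the other. Suppose that every node knows the blocks `q < j` exactly from time `K` on.
Then the error of block `j` at its source follows the nilpotent dynamics and vanishes from time
`K + d_j` on.

At any other node, a freshness index `τ` at time `k` with `k - τ ≥ K` means that the error is the
image under `A_jj ^ τ` of the source error at time `k - τ`; it vanishes if `k - τ ≥ K + d_j`
(`err_zero_of_fresh`). The property `τ + (K + d_j) ≤ k` persists in time and passes from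
in-neighbours to a node. Since the union graph over each interval `[t_q, t_{q+1})` is strongly
connected, each interval brings it to a new node (`spread`), so it holds everywhere after at most
`N` intervals of length at most `T'`; and `N ≤ 2 (N - 1)` when there is a node besides the source.
Hence block `j` costs at most `d_j + 2 (N - 1) T'` steps, and the block sizes sum to `n`.
-/

open Finset

/-! ### Dead-beat gains -/

/-- The states at time `k` reached by trajectories of `v ↦ A v` with zero outputs before time `k`:
`V_0 = V` and `V_{k+1} = A (V_k ∩ ker C)`. -/
def unobs {V Y : Type*} [AddCommGroup V] [Module ℝ V] [AddCommGroup Y] [Module ℝ Y]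
    (A : V →ₗ[ℝ] V) (C : V →ₗ[ℝ] Y) : ℕ → Submodule ℝ V
  | 0 => ⊤
  | k + 1 => (unobs A C k ⊓ LinearMap.ker C).map A

section Deadbeat

variable {V Y : Type*} [AddCommGroup V] [Module ℝ V] [AddCommGroup Y] [Module ℝ Y]
  (A : V →ₗ[ℝ] V) (C : V →ₗ[ℝ] Y)

lemma unobs_succ_le (k : ℕ) : unobs A C (k + 1) ≤ unobs A C k := by
  induction k with
  | zero => exact le_top
  | succ k ih => exact Submodule.map_mono (inf_le_inf_right _ ih)

lemma exists_of_mem_unobs (k : ℕ) : ∀ v ∈ unobs A C k,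
    ∃ w, v = (A ^ k) w ∧ ∀ i < k, C ((A ^ i) w) = 0 := by
  induction k with
  | zero => intro v _; exact ⟨v, by simp, by simp⟩
  | succ k ih =>
    rintro v ⟨u, ⟨hu, hCu⟩, rfl⟩
    obtain ⟨w, rfl, hw⟩ := ih u hu
    refine ⟨w, by rw [pow_succ', Module.End.mul_apply], fun i hi => ?_⟩
    rcases Nat.lt_succ_iff_lt_or_eq.mp hi with h | rfl
    · exact hw i h
    · exact hCu

/-- A gain that shifts the filtration `unobs` from level `m + 1` on can be corrected so that it
shifts it from level `m` on: the correction vanishes on `C (V_{m+1})`, and modulo this subspace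
the value it must take on `C v`, `v ∈ V_m`, is well defined modulo `V_{m+1}`. -/
lemma exists_gain_step (m : ℕ) (L : Y →ₗ[ℝ] V)
    (hL : ∀ k, m + 1 ≤ k → ∀ v ∈ unobs A C k, A v - L (C v) ∈ unobs A C (k + 1)) :
    ∃ L' : Y →ₗ[ℝ] V,
      ∀ k, m ≤ k → ∀ v ∈ unobs A C k, A v - L' (C v) ∈ unobs A C (k + 1) := by
  set W := unobs A C (m + 1) with hW
  let φ : V →ₗ[ℝ] V := A - L ∘ₗ C
  let f : unobs A C m →ₗ[ℝ] Y ⧸ W.map C := (W.map C).mkQ ∘ₗ C ∘ₗ (unobs A C m).subtype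
  let g : unobs A C m →ₗ[ℝ] V ⧸ W := W.mkQ ∘ₗ φ ∘ₗ (unobs A C m).subtype
  have hker : LinearMap.ker f ≤ LinearMap.ker g := by
    rintro ⟨v, hv⟩ hf
    have h1 : C v ∈ W.map C := by simpa [f] using hf
    obtain ⟨w, hw, hCw⟩ := h1
    have h2 : A (v - w) ∈ W :=
      ⟨v - w, ⟨Submodule.sub_mem _ hv (unobs_succ_le A C m hw), by simp [hCw]⟩, rfl⟩
    have h3 : A w - L (C w) ∈ W := unobs_succ_le A C (m + 1) (hL (m + 1) le_rfl w hw)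
    have h4 : A v - L (C v) ∈ W := by
      have := W.add_mem h2 h3
      rw [hCw] at this
      convert this using 1
      rw [map_sub]; abel
    exact (Submodule.Quotient.mk_eq_zero W).mpr h4
  obtain ⟨h, hh⟩ : ∃ h : (Y ⧸ W.map C) →ₗ[ℝ] (V ⧸ W), h ∘ₗ f = g := by
    obtain ⟨h, hh⟩ := LinearMap.exists_extend
      (((LinearMap.ker f).liftQ g hker) ∘ₗ f.quotKerEquivRange.symm.toLinearMap)
    refine ⟨h, LinearMap.ext fun v => ?_⟩
    have := LinearMap.congr_fun hh (⟨f v, v, rfl⟩ : LinearMap.range f)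
    have h5 : f.quotKerEquivRange.symm ⟨f v, v, rfl⟩ = Submodule.Quotient.mk v :=
      f.quotKerEquivRange_symm_apply_image v (by simp)
    simpa [h5] using this
  obtain ⟨s, hs⟩ := LinearMap.exists_rightInverse_of_surjective W.mkQ W.range_mkQ
  let D : Y →ₗ[ℝ] V := s ∘ₗ h ∘ₗ (W.map C).mkQ
  refine ⟨L + D, fun k hk v hv => ?_⟩
  rcases hk.eq_or_lt with rfl | hk
  · have h1 : h ((W.map C).mkQ (C v)) = W.mkQ (φ v) := LinearMap.congr_fun hh ⟨v, hv⟩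
    have h2 : W.mkQ (D (C v)) = W.mkQ (φ v) := by
      rw [← h1]; exact LinearMap.congr_fun hs _
    have h3 := (Submodule.Quotient.eq W).mp h2.symm
    simpa [φ, sub_sub] using h3
  · have hle : unobs A C k ≤ W := antitone_nat_of_succ_le (unobs_succ_le A C) hk
    have h1 : D (C v) = 0 := by
      have : (W.map C).mkQ (C v) = 0 := by
        simpa using ⟨v, hle hv, rfl⟩
      simp only [D, LinearMap.comp_apply, this, map_zero]
    simpa [h1] using hL k hk v hv

/-- Dead-beat observer: if only `0` is unobservable over `d` steps, some output injection
makes the error vanish after `d` steps. -/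
lemma exists_deadbeat_s3 (d : ℕ) (h : ∀ v, (∀ i < d, C ((A ^ i) v) = 0) → v = 0) :
    ∃ L : Y →ₗ[ℝ] V, (A - L ∘ₗ C) ^ d = 0 := by
  have hd : ∀ v ∈ unobs A C d, v = 0 := fun v hv => by
    obtain ⟨w, rfl, hw⟩ := exists_of_mem_unobs A C d v hv
    rw [h w hw, map_zero]
  have key : ∀ m ≤ d, ∃ L : Y →ₗ[ℝ] V,
      ∀ k, d - m ≤ k → ∀ v ∈ unobs A C k, A v - L (C v) ∈ unobs A C (k + 1) := by
    intro m
    induction m with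
    | zero =>
      refine fun _ => ⟨0, fun k hk v hv => ?_⟩
      have : v = 0 := hd v (antitone_nat_of_succ_le (unobs_succ_le A C) hk hv)
      simp [this]
    | succ m ih =>
      intro hm
      obtain ⟨L, hL⟩ := ih (by omega)
      exact exists_gain_step A C (d - (m + 1)) L fun k hk => hL k (by omega)
  obtain ⟨L, hL⟩ := key d le_rfl
  refine ⟨L, LinearMap.ext fun v => hd _ ?_⟩
  have : ∀ k, ((A - L ∘ₗ C) ^ k) v ∈ unobs A C k := by
    intro k
    induction k with
    | zero => exact Submodule.mem_top
    | succ k ih =>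
      rw [pow_succ', Module.End.mul_apply]
      exact hL k (by omega) _ ih
  exact this d

end Deadbeat

/-- Observable pairs admit a dead-beat gain. -/
lemma Observable.exists_gain {n : ℕ} {m : ℕ}
    {A : Matrix (Fin n) (Fin n) ℝ} {C : Matrix (Fin m) (Fin n) ℝ} (h : Observable A C) :
    ∃ L : Matrix (Fin n) (Fin m) ℝ, (A - L * C) ^ n = 0 := by
  obtain ⟨L, hL⟩ := exists_deadbeat_s3 (Matrix.toLin' A) (Matrix.toLin' C) n
    (fun v hv => h.eq_zero v fun i hi => by
      have := hv i hi
      rwa [← Matrix.toLin'_pow, Matrix.toLin'_apply, Matrix.toLin'_apply] at this)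
  refine ⟨LinearMap.toMatrix' L, Matrix.toLin'.injective ?_⟩
  rw [Matrix.toLin'_pow, map_sub, Matrix.toLin'_mul, Matrix.toLin'_toMatrix', hL, map_zero]

/-! ### Spread of information over the network -/

/-- A property of nodes that persists, passes along edges and holds at node `j` at time `t q`
holds at every node from time `t (q + (N - 1))` on: in each interval whose union graph is
strongly connected it reaches at least one further node. -/
lemma spread {N : ℕ} (Nbrs : Fin N → ℕ → Set (Fin N)) (t : ℕ → ℕ) (htmono : StrictMono t)
    (hC3 : ∀ q, ∀ a b : Fin N,
      Relation.ReflTransGen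
        (fun l i => ∃ τ, t q ≤ τ ∧ τ < t (q + 1) ∧ l ∈ Nbrs i τ) a b)
    (F : Fin N → ℕ → Prop) (hpers : ∀ i k, F i k → F i (k + 1))
    (hedge : ∀ i k, ∀ l ∈ Nbrs i k, F l k → F i (k + 1))
    (j : Fin N) (q : ℕ) (hj : F j (t q)) (i : Fin N) (k : ℕ) (hk : t (q + (N - 1)) ≤ k) :
    F i k := by
  classical
  have hmono : ∀ i k k', k ≤ k' → F i k → F i k' := fun i k k' hkk' h =>
    Nat.le_induction h (fun m _ => hpers i m) k' hkk'
  let S : ℕ → Finset (Fin N) := fun s => univ.filter fun i => F i s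
  have hS : ∀ i s, i ∈ S s ↔ F i s := fun i s => by simp [S]
  have hcard : ∀ p, p + 1 ≤ N → p + 1 ≤ #(S (t (q + p))) := by
    intro p
    induction p with
    | zero => exact fun _ => Finset.card_pos.mpr ⟨j, (hS _ _).mpr hj⟩
    | succ p ih =>
      intro hp
      have hp' := ih (by omega)
      have hlt : t (q + p) < t (q + (p + 1)) := htmono (by omega)
      have hsub : S (t (q + p)) ⊆ S (t (q + (p + 1))) := fun i hi =>
        (hS _ _).mpr (hmono i _ _ hlt.le ((hS _ _).mp hi))
      by_contra hcon
      have heq := Finset.eq_of_subset_of_card_le hsub (by omega)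
      -- The set of informed nodes did not grow, so it is closed under the edges of the interval.
      have hall : ∀ b, F b (t (q + p)) := by
        intro b
        induction hC3 (q + p) j b with
        | refl => exact hmono j _ _ (htmono.monotone (by omega)) hj
        | tail _ hstep ih =>
          obtain ⟨s, hs1, hs2, hmem⟩ := hstep
          have h1 := hmono _ _ (t (q + (p + 1))) (by exact hs2)
            (hedge _ s _ hmem (hmono _ _ s hs1 ih))
          exact (hS _ _).mp (heq ▸ (hS _ _).mpr h1)
      have huniv : S (t (q + p)) = univ :=
        Finset.eq_univ_of_forall fun b => (hS _ _).mpr (hall b)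
      have : #(S (t (q + p))) = N := by rw [huniv, Finset.card_fin]
      rw [← heq] at hcon
      omega
  have hN : N - 1 + 1 ≤ N := by have := j.2; omega
  have h := hcard (N - 1) hN
  have huniv : S (t (q + (N - 1))) = univ :=
    (Finset.card_eq_iff_eq_univ _).mp
      (le_antisymm (Finset.card_le_univ _) (by rw [Fintype.card_fin]; omega))
  exact hmono i _ _ hk ((hS _ _).mp (huniv ▸ mem_univ i))

/-- Gaps at most `T'` place some `t q` in `[K, K + T']`, and `N - 1` further gaps lead to at most
`K + N T' ≤ K + 2 (N - 1) T'` when there are at least two nodes. -/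
lemma exists_index (t : ℕ → ℕ) (ht0 : t 0 = 0) (htmono : StrictMono t) (T' N K : ℕ)
    (hT' : ∀ q, t (q + 1) - t q ≤ T') (hN : 2 ≤ N) :
    ∃ q, K ≤ t q ∧ t (q + (N - 1)) ≤ K + 2 * (N - 1) * T' := by
  have hstep : ∀ q, t (q + 1) ≤ t q + T' := fun q => by have := hT' q; omega
  have hadd : ∀ q p, t (q + p) ≤ t q + p * T' := by
    intro q p
    induction p with
    | zero => simp
    | succ p ih => have := hstep (q + p); rw [← add_assoc, add_mul]; omega
  have hex : ∃ q, K ≤ t q := ⟨K, htmono.le_apply⟩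
  have hq : t (Nat.find hex) ≤ K + T' := by
    rcases h : Nat.find hex with _ | q
    · omega
    · have h1 : ¬ K ≤ t q := Nat.find_min hex (by omega)
      have := hstep q
      omega
  refine ⟨Nat.find hex, Nat.find_spec hex, ?_⟩
  have h1 := hadd (Nat.find hex) (N - 1)
  have h2 : 1 * T' ≤ (N - 1) * T' := Nat.mul_le_mul_right _ (by omega)
  have h3 : 2 * (N - 1) * T' = (N - 1) * T' + (N - 1) * T' := by ring
  omega

/-! ### Errors of a single block -/

/-- Let `err` be the errors of one block from time `K` on. Fresh nodes, whose index `τ` satisfies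
`τ + K ≤ k`, hold data that left the source at a time `k - τ ≥ K`, so their error is zero. -/
lemma err_zero_of_fresh {N m : ℕ} (B : Matrix (Fin m) (Fin m) ℝ) (j : Fin N) (K : ℕ)
    (τ : Fin N → ℕ → ℕ∞) (err : Fin N → ℕ → Fin m → ℝ)
    (hsrc : ∀ k, K ≤ k → err j k = 0)
    (hτ0 : ∀ i, i ≠ j → τ i 0 = ⊤)
    (hstep : ∀ i, i ≠ j → ∀ k, ∃ u, τ i (k + 1) = τ u k + 1 ∧
      (K ≤ k → err i (k + 1) = B.mulVec (err u k))) :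
    ∀ k i, τ i k + (K : ℕ∞) ≤ k → err i k = 0 := by
  intro k
  induction k with
  | zero =>
    intro i hi
    by_cases hij : i = j
    · subst hij
      refine hsrc 0 ?_
      exact_mod_cast le_add_self.trans hi
    · simp [hτ0 i hij] at hi
  | succ k ih =>
    intro i hi
    by_cases hij : i = j
    · subst hij
      refine hsrc (k + 1) ?_
      exact_mod_cast le_add_self.trans hi
    · obtain ⟨u, hu, herr⟩ := hstep i hij k
      have h1 : τ u k + (K : ℕ∞) ≤ k := by
        rw [hu, add_right_comm, Nat.cast_add, Nat.cast_one] at hi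
        exact (ENat.add_le_add_iff_right ENat.one_ne_top).mp hi
      have hK : K ≤ k := by exact_mod_cast le_add_self.trans h1
      rw [herr hK, ih u h1, Matrix.mulVec_zero]

lemma err_zero_of_nilpotent {m : ℕ} (B : Matrix (Fin m) (Fin m) ℝ) (hB : B ^ m = 0) (K : ℕ)
    (err : ℕ → Fin m → ℝ) (hstep : ∀ k, K ≤ k → err (k + 1) = B.mulVec (err k)) :
    ∀ k, K + m ≤ k → err k = 0 := by
  have hpow : ∀ p k, K ≤ k → err (k + p) = (B ^ p).mulVec (err k) := by
    intro p k hk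
    induction p with
    | zero => simp
    | succ p ih => rw [← add_assoc, hstep _ (by omega), ih, Matrix.mulVec_mulVec, ← pow_succ']
  intro k hk
  have := hpow m (k - m) (by omega)
  rwa [hB, Matrix.zero_mulVec, Nat.sub_add_cancel (by omega)] at this

/-- A block row that vanishes right of the diagonal block. -/
lemma lower_sum {N R : ℕ} {d : Fin N → ℕ} (M : ∀ q : Fin N, Matrix (Fin R) (Fin (d q)) ℝ)
    (j : Fin N) (hM : ∀ q, j < q → M q = 0) (z : ∀ q : Fin N, Fin (d q) → ℝ) :
    ∑ q, (M q).mulVec (z q) =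
      (M j).mulVec (z j) + ∑ q ∈ univ.filter (fun q => q < j), (M q).mulVec (z q) := by
  rw [← Finset.sum_insert (f := fun q => (M q).mulVec (z q)) (by simp)]
  symm
  refine Finset.sum_subset (Finset.subset_univ _) fun q _ hq => ?_
  have : j < q := by
    simp only [mem_insert, mem_filter, mem_univ, true_and, not_or, not_lt] at hq
    exact lt_of_le_of_ne hq.2 (Ne.symm hq.1)
  rw [hM q this, Matrix.zero_mulVec]

/-! ### Recovery block by block -/

/-- **Corollary 1**: under joint observability, the communication conditions (C1)–(C3),
and uniformly bounded inter-communication intervals `f(t_q) ≤ T'`, the observer gains can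
be chosen so that every run of Algorithm 1 recovers the state exactly within
`n + 2N(N−1)T'` time-steps. -/
theorem algorithm1_finite_time_bound
    -- system and measurements
    {n N : ℕ} (hN : 0 < N)
    (A : Matrix (Fin n) (Fin n) ℝ)
    (r : Fin N → ℕ) (C : ∀ i : Fin N, Matrix (Fin (r i)) (Fin n) ℝ)
    (x : ℕ → (Fin n → ℝ)) (hx : ∀ k, x (k + 1) = A.mulVec (x k))
    (hobs : Observable A
      (Matrix.of fun (p : Σ i : Fin N, Fin (r i)) (col : Fin n) => C p.1 p.2 col))
    -- communication graph sequence: `Nbrs i k` is the in-neighbor set of node `i` at time `k`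
    (Nbrs : Fin N → ℕ → Set (Fin N)) (hNbrs : ∀ i k, i ∉ Nbrs i k)
    -- the sequence 𝕀 = {t 0 = 0 < t 1 < t 2 < …}
    (t : ℕ → ℕ) (ht0 : t 0 = 0) (htmono : StrictMono t)
    -- (C1): f(t_q) := t_{q+1} − t_q is nondecreasing in q
    (hC1 : ∀ q, t (q + 1) - t q ≤ t (q + 2) - t (q + 1))
    -- (C2): limsup_{k→∞} 2(N−1)g(k)/k = δ < 1
    (hC2 : ∃ δ : ℝ, δ < 1 ∧
      Filter.limsup (fun k : ℕ => (2 * (N - 1 : ℝ) * (gfun t k : ℝ)) / (k : ℝ))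
        Filter.atTop = δ)
    -- (C3): the union graph over each interval [t_q, t_{q+1}) is strongly connected
    (hC3 : ∀ q, ∀ a b : Fin N,
      Relation.ReflTransGen
        (fun l i => ∃ τ, t q ≤ τ ∧ τ < t (q + 1) ∧ l ∈ Nbrs i τ) a b)
    -- the multi-sensor observability decomposition: an invertible `T`,
    -- block sizes `d j` with index identification `e`
    (T : Matrix (Fin n) (Fin n) ℝ) (hT : IsUnit T.det)
    (d : Fin N → ℕ) (e : (Σ j : Fin N, Fin (d j)) ≃ Fin n)
    -- block entries of `Ā = T⁻¹AT` and `C̄_j = C_j T`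
    (Ablk : ∀ j q : Fin N, Matrix (Fin (d j)) (Fin (d q)) ℝ)
    (Cblk : ∀ j q : Fin N, Matrix (Fin (r j)) (Fin (d q)) ℝ)
    (hAblk : ∀ (j q : Fin N) (a : Fin (d j)) (b : Fin (d q)),
      Ablk j q a b = (T⁻¹ * A * T) (e ⟨j, a⟩) (e ⟨q, b⟩))
    (hCblk : ∀ (j q : Fin N) (row : Fin (r j)) (b : Fin (d q)),
      Cblk j q row b = (C j * T) row (e ⟨q, b⟩))
    -- `Ā` is block lower triangular and `C̄_j = [C_{j1} … C_{jj} 0 … 0]`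
    (hAlow : ∀ j q : Fin N, j < q → Ablk j q = 0)
    (hClow : ∀ j q : Fin N, j < q → Cblk j q = 0)
    -- each diagonal pair is observable
    (hblkobs : ∀ j : Fin N, Observable (Ablk j j) (Cblk j j)) :
    -- additionally the inter-communication intervals are bounded: f(t_q) ≤ T'
    ∀ T' : ℕ, 0 < T' → (∀ q, t (q + 1) - t q ≤ T') →
    -- conclusion: there exist gains L such that every run of Algorithm 1
    -- converges in at most n + 2N(N−1)T' time-steps
    ∃ L : ∀ j : Fin N, Matrix (Fin (d j)) (Fin (r j)) ℝ,
      ∀ (τ : Fin N → Fin N → ℕ → ℕ∞)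
        (zhat : ∀ (_ : Fin N) (j : Fin N), ℕ → (Fin (d j) → ℝ)),
        -- source node: zero freshness-index and Luenberger-type update
        (∀ j : Fin N, ∀ k, τ j j k = 0) →
        (∀ j : Fin N, ∀ k, zhat j j (k + 1) =
          (Ablk j j - L j * Cblk j j).mulVec (zhat j j k)
          + ∑ q ∈ Finset.univ.filter (fun q => q < j),
              (Ablk j q - L j * Cblk j q).mulVec (zhat j q k)
          + (L j).mulVec ((C j).mulVec (x k))) →
        -- non-source nodes: initialization and freshness-index based updates
        (∀ i j : Fin N, i ≠ j → τ i j 0 = ⊤) →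
        (∀ i j : Fin N, i ≠ j → ∀ k,
          (sInf ((fun l => τ l j k) '' Nbrs i k) < τ i j k →
            ∃ u ∈ Nbrs i k,
              τ u j k = sInf ((fun l => τ l j k) '' Nbrs i k) ∧
              τ i j (k + 1) = τ u j k + 1 ∧
              zhat i j (k + 1) = (Ablk j j).mulVec (zhat u j k)
                + ∑ q ∈ Finset.univ.filter (fun q => q < j),
                    (Ablk j q).mulVec (zhat i q k)) ∧
          (¬ sInf ((fun l => τ l j k) '' Nbrs i k) < τ i j k →
            τ i j (k + 1) = τ i j k + 1 ∧
            zhat i j (k + 1) = (Ablk j j).mulVec (zhat i j k)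
              + ∑ q ∈ Finset.univ.filter (fun q => q < j),
                  (Ablk j q).mulVec (zhat i q k))) →
        -- conclusion: with x̂_i[k] = T ẑ_i[k], the estimate equals the state for all
        -- k ≥ n + 2N(N−1)T'
        ∀ (i : Fin N) (k : ℕ), n + 2 * N * (N - 1) * T' ≤ k →
          (T.mulVec (fun p' => zhat i (e.symm p').1 k (e.symm p').2)) = x k := by
  intro T' _ hT'
  choose L hL using fun j => (hblkobs j).exists_gain
  refine ⟨L, ?_⟩
  intro τ zhat hτsrc hzsrc hτ0 hupd
  -- The true state in block coordinates.
  let z : ∀ j : Fin N, ℕ → Fin (d j) → ℝ := fun j k a => (T⁻¹.mulVec (x k)) (e ⟨j, a⟩)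
  have hTT : T * T⁻¹ = 1 := Matrix.mul_nonsing_inv T hT
  have hreindex : ∀ (w v : Fin n → ℝ), ∑ p, w p * v p
      = ∑ q, ∑ b, w (e ⟨q, b⟩) * v (e ⟨q, b⟩) := fun w v => by
    rw [← e.sum_comp, Fintype.sum_sigma]
  have hz : ∀ j k, z j (k + 1) = (Ablk j j).mulVec (z j k)
      + ∑ q ∈ univ.filter (fun q => q < j), (Ablk j q).mulVec (z q k) := by
    intro j k
    rw [← lower_sum (fun q => Ablk j q) j (hAlow j) (fun q => z q k)]
    funext a
    have h1 : T⁻¹.mulVec (x (k + 1)) = (T⁻¹ * A * T).mulVec (T⁻¹.mulVec (x k)) := by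
      rw [Matrix.mulVec_mulVec, Matrix.mul_assoc, hTT, Matrix.mul_one, hx,
        Matrix.mulVec_mulVec]
    change (T⁻¹.mulVec (x (k + 1))) (e ⟨j, a⟩) = _
    rw [h1, Finset.sum_apply]
    simp only [Matrix.mulVec, dotProduct, hAblk, z]
    exact hreindex _ _
  have hCx : ∀ j k, (C j).mulVec (x k) = (Cblk j j).mulVec (z j k)
      + ∑ q ∈ univ.filter (fun q => q < j), (Cblk j q).mulVec (z q k) := by
    intro j k
    rw [← lower_sum (fun q => Cblk j q) j (hClow j) (fun q => z q k)]
    funext a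
    have h1 : (C j).mulVec (x k) = (C j * T).mulVec (T⁻¹.mulVec (x k)) := by
      rw [Matrix.mulVec_mulVec, Matrix.mul_assoc, hTT, Matrix.mul_one]
    rw [h1, Finset.sum_apply]
    simp only [Matrix.mulVec, dotProduct, hCblk, z]
    exact hreindex _ _
  -- Every non-source node adopts the data of some node `u`, possibly itself.
  have hadopt : ∀ i j, i ≠ j → ∀ k, ∃ u, τ i j (k + 1) = τ u j k + 1 ∧
      τ u j k ≤ τ i j k ∧ (∀ l ∈ Nbrs i k, τ u j k ≤ τ l j k) ∧
      zhat i j (k + 1) = (Ablk j j).mulVec (zhat u j k)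
        + ∑ q ∈ univ.filter (fun q => q < j), (Ablk j q).mulVec (zhat i q k) := by
    intro i j hij k
    have hinf : ∀ l ∈ Nbrs i k, sInf ((fun l => τ l j k) '' Nbrs i k) ≤ τ l j k :=
      fun l hl => sInf_le ⟨l, hl, rfl⟩
    by_cases hlt : sInf ((fun l => τ l j k) '' Nbrs i k) < τ i j k
    · obtain ⟨u, _, hu, h1, h2⟩ := (hupd i j hij k).1 hlt
      exact ⟨u, h1, hu ▸ hlt.le, fun l hl => hu ▸ hinf l hl, h2⟩
    · obtain ⟨h1, h2⟩ := (hupd i j hij k).2 hlt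
      exact ⟨i, h1, le_rfl, fun l hl => (not_lt.mp hlt).trans (hinf l hl), h2⟩
  have main : ∀ j i k, ∑ q ∈ univ.filter (fun q => q ≤ j), (d q + 2 * (N - 1) * T') ≤ k →
      zhat i j k = z j k := by
    intro j
    induction j using WellFoundedLT.induction with
    | ind j ih =>
    set K := ∑ q ∈ univ.filter (fun q => q < j), (d q + 2 * (N - 1) * T') with hK
    have hsum : ∑ q ∈ univ.filter (fun q => q ≤ j), (d q + 2 * (N - 1) * T')
        = K + d j + 2 * (N - 1) * T' := by
      have : univ.filter (fun q => q ≤ j) = insert j (univ.filter (fun q => q < j)) := by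
        ext q; simp [le_iff_eq_or_lt]
      rw [this, Finset.sum_insert (by simp), hK]
      ring
    have hprev : ∀ q, q < j → ∀ i k, K ≤ k → zhat i q k = z q k := by
      intro q hq i k hk
      refine ih q hq i k (le_trans (Finset.sum_le_sum_of_subset ?_) hk)
      intro p hp
      simp only [mem_filter, mem_univ, true_and] at hp ⊢
      exact hp.trans_lt hq
    have hsrc : ∀ k, K + d j ≤ k → zhat j j k - z j k = 0 := by
      refine err_zero_of_nilpotent _ (hL j) K (fun k => zhat j j k - z j k) fun k hk => ?_
      have h1 : ∑ q ∈ univ.filter (fun q => q < j),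
            (Ablk j q - L j * Cblk j q).mulVec (zhat j q k)
          = ∑ q ∈ univ.filter (fun q => q < j), (Ablk j q).mulVec (z q k)
            - (L j).mulVec
              (∑ q ∈ univ.filter (fun q => q < j), (Cblk j q).mulVec (z q k)) := by
        rw [Matrix.mulVec_sum, ← Finset.sum_sub_distrib]
        refine Finset.sum_congr rfl fun q hq => ?_
        rw [hprev q (mem_filter.mp hq).2 j k hk, Matrix.sub_mulVec, Matrix.mulVec_mulVec]
      change zhat j j (k + 1) - z j (k + 1) = _
      rw [hzsrc, h1, hz, hCx, Matrix.mulVec_add, Matrix.mulVec_sub, Matrix.mulVec_mulVec,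
        Matrix.sub_mulVec _ _ (z j k)]
      abel
    intro i k hk
    rw [hsum] at hk
    rw [← sub_eq_zero]
    by_cases hij : i = j
    · subst hij
      exact hsrc k (by omega)
    -- A node other than the source exists, so `2 ≤ N`.
    have hN2 : 2 ≤ N := by
      have h1 := i.2
      have h2 := j.2
      have h3 : (i : ℕ) ≠ j := fun h => hij (Fin.ext h)
      omega
    refine err_zero_of_fresh (Ablk j j) j (K + d j) (fun i k => τ i j k)
      (fun i k => zhat i j k - z j k) hsrc (fun i hi => hτ0 i j hi) ?_ k i ?_
    · intro i hi k
      obtain ⟨u, h1, -, -, h2⟩ := hadopt i j hi k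
      refine ⟨u, h1, fun hk => ?_⟩
      have h3 : ∑ q ∈ univ.filter (fun q => q < j), (Ablk j q).mulVec (zhat i q k)
          = ∑ q ∈ univ.filter (fun q => q < j), (Ablk j q).mulVec (z q k) :=
        Finset.sum_congr rfl fun q hq => by
          rw [hprev q (mem_filter.mp hq).2 i k (by omega)]
      change zhat i j (k + 1) - z j (k + 1) = _
      rw [h2, h3, hz, Matrix.mulVec_sub]
      abel
    · obtain ⟨q, hq1, hq2⟩ := exists_index t ht0 htmono T' N (K + d j) hT' hN2
      have hnext : ∀ (a b : ℕ∞) (k : ℕ), a = b + 1 → b + ((K + d j : ℕ) : ℕ∞) ≤ k →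
          a + ((K + d j : ℕ) : ℕ∞) ≤ ((k + 1 : ℕ) : ℕ∞) := by
        rintro _ b k rfl h
        rw [add_right_comm, Nat.cast_succ]
        gcongr
      have hsrcF : ∀ k, K + d j ≤ k → τ j j k + ((K + d j : ℕ) : ℕ∞) ≤ k := fun k hk => by
        rw [hτsrc, zero_add]; exact_mod_cast hk
      refine spread Nbrs t htmono hC3 (fun i k => τ i j k + ((K + d j : ℕ) : ℕ∞) ≤ k)
        ?_ ?_ j q (hsrcF _ hq1) i k (hq2.trans hk)
      · intro i k h
        by_cases hi : i = j
        · subst hi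
          have : K + d i ≤ k := by exact_mod_cast le_add_self.trans h
          exact hsrcF _ (by omega)
        · obtain ⟨u, h1, h2, -, -⟩ := hadopt i j hi k
          exact hnext _ _ k h1 ((add_le_add_left h2 _).trans h)
      · intro i k l hl h
        by_cases hi : i = j
        · subst hi
          have : K + d i ≤ k := by exact_mod_cast le_add_self.trans h
          exact hsrcF _ (by omega)
        · obtain ⟨u, h1, -, h2, -⟩ := hadopt i j hi k
          exact hnext _ _ k h1 ((add_le_add_left (h2 l hl) _).trans h)
  intro i k hk
  have hdsum : ∑ q, d q = n := by
    have := Fintype.card_congr e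
    simpa using this
  have hall : ∀ j, zhat i j k = z j k := by
    intro j
    refine main j i k (le_trans ?_ hk)
    calc ∑ q ∈ univ.filter (fun q => q ≤ j), (d q + 2 * (N - 1) * T')
        ≤ ∑ q, (d q + 2 * (N - 1) * T') := Finset.sum_le_sum_of_subset (Finset.filter_subset _ _)
      _ = n + 2 * N * (N - 1) * T' := by
        rw [Finset.sum_add_distrib, hdsum, Finset.sum_const, Finset.card_fin, smul_eq_mul]
        ring
  have hvec : (fun p' => zhat i (e.symm p').1 k (e.symm p').2) = T⁻¹.mulVec (x k) := by
    funext p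
    rw [hall]
    simp [z]
  rw [hvec, Matrix.mulVec_mulVec, hTT, Matrix.one_mulVec]
end

section
/- Suppose that at some time-step k ∈ ℕ_+ one has τ_i[k] = m for some node i ≠ j and some m ∈ ℕ_+ (in particular τ_i[k] is finite). Then there exists a map v : {k−m, k−m+1, …, k} → {1,…,N} with v(k−m) = j and v(k) = i such that ẑ_i[k] = A^m ẑ_j[k−m] + Σ_{t = k−m}^{k−1} A^{k−t−1} w_{v(t+1)}[t]. -/
/-!
At every step a non-source node takes its new estimate from some predecessor `u` (an in-neighbor
or itself), and both update rules then have the same form: `τ i (k+1) = τ u k + 1` and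
`ẑ i (k+1) = A ẑ u k + w i k`. Following predecessors backwards lowers the index by one per step,
and only the source can have index `0`, since other nodes start at `∞` and every update yields a
successor. So an index `m` at time `k` forces a chain of exactly `m` predecessors ending at `j` at
time `k - m` (in particular `m ≤ k`), and unrolling the recursion along that chain gives the
formula. `exists_chain` is this induction on `m`.
-/

/-- Chain of predecessors behind a finite freshness-index `m`, for any index and estimate
dynamics in which each update copies from a predecessor. The starting time is a variable `s` with
`k = s + m`, so no truncated subtraction `k - m` is involved, and `m = 0` is allowed so that the
induction can start at the source itself. -/
theorem exists_chain {N m' : ℕ} (j : Fin N) (A : Matrix (Fin m') (Fin m') ℝ)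
    (w : Fin N → ℕ → (Fin m' → ℝ)) (τ : Fin N → ℕ → ℕ∞) (zhat : Fin N → ℕ → (Fin m' → ℝ))
    (hsrc : ∀ k, τ j k = 0) (hinit : ∀ i : Fin N, i ≠ j → τ i 0 = ⊤)
    (hstep : ∀ i : Fin N, i ≠ j → ∀ k, ∃ u, τ i (k + 1) = τ u k + 1 ∧
      zhat i (k + 1) = A.mulVec (zhat u k) + w i k)
    (m : ℕ) : ∀ (i : Fin N) (k : ℕ), τ i k = (m : ℕ∞) →
      ∃ (s : ℕ) (v : ℕ → Fin N), k = s + m ∧ v s = j ∧ v k = i ∧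
        zhat i k = (A ^ m).mulVec (zhat j s)
          + ∑ t ∈ Finset.Ico s k, (A ^ (k - t - 1)).mulVec (w (v (t + 1)) t) := by
  induction m with
  | zero =>
    intro i k h
    have hi : i = j := by
      by_contra hne
      cases k with
      | zero => simp [hinit i hne] at h
      | succ k =>
        obtain ⟨u, hu, -⟩ := hstep i hne k
        simp [hu] at h
    subst hi
    exact ⟨k, fun _ => i, by simp⟩
  | succ m ih =>
    intro i k h
    have hne : i ≠ j := by
      rintro rfl
      rw [hsrc] at h
      exact absurd h.symm (by simp)
    cases k with
    | zero =>
      rw [hinit i hne] at h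
      exact absurd h.symm (ENat.natCast_ne_top _)
    | succ k =>
      obtain ⟨u, hu, hz⟩ := hstep i hne k
      have hum : τ u k = (m : ℕ∞) := by
        rw [hu, Nat.cast_succ] at h
        exact WithTop.add_right_cancel ENat.one_ne_top h
      obtain ⟨s, v, hk, hvs, -, hzu⟩ := ih u k hum
      refine ⟨s, Function.update v (k + 1) i, by omega, ?_, by simp, ?_⟩
      · rw [Function.update_of_ne (by omega), hvs]
      · rw [hz, hzu, Finset.sum_Ico_succ_top (by omega), Matrix.mulVec_add,
          Matrix.mulVec_mulVec, ← pow_succ', Matrix.mulVec_sum, add_assoc]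
        congr 2
        · refine Finset.sum_congr rfl fun t ht => ?_
          rw [Finset.mem_Ico] at ht
          rw [Function.update_of_ne (by omega), Matrix.mulVec_mulVec, ← pow_succ']
          congr 2
          omega
        · simp


/-- **Lemma 2 (delayed-estimate form)**: if at time `k` the freshness-index of a
non-source node `i` equals `m ∈ ℕ₊`, then its estimate is a delayed version of the source
node's estimate: there is a chain of nodes `v` on `{k−m, …, k}` with `v (k−m) = j`,
`v k = i`, and `ẑ_i[k] = A^m ẑ_j[k−m] + Σ_{t=k−m}^{k−1} A^{k−t−1} w_{v(t+1)}[t]`. -/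
theorem freshness_index_delayed_form
    {N m' : ℕ}
    -- communication graph sequence
    (Nbrs : Fin N → ℕ → Set (Fin N)) (hNbrs : ∀ i k, i ∉ Nbrs i k)
    -- source node, dynamics matrix, arbitrary input sequences
    (j : Fin N) (A : Matrix (Fin m') (Fin m') ℝ) (w : Fin N → ℕ → (Fin m' → ℝ))
    -- freshness-indices and estimates
    (τ : Fin N → ℕ → ℕ∞) (zhat : Fin N → ℕ → (Fin m' → ℝ))
    -- source node rules: τ_j ≡ 0, ẑ_j arbitrary
    (hsrc : ∀ k, τ j k = 0)
    -- non-source nodes: initialization and update rules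
    (hinit : ∀ i : Fin N, i ≠ j → τ i 0 = ⊤)
    (hupd : ∀ i : Fin N, i ≠ j → ∀ k,
      (sInf ((fun l => τ l k) '' Nbrs i k) < τ i k →
        ∃ u ∈ Nbrs i k,
          τ u k = sInf ((fun l => τ l k) '' Nbrs i k) ∧
          τ i (k + 1) = τ u k + 1 ∧
          zhat i (k + 1) = A.mulVec (zhat u k) + w i k) ∧
      (¬ sInf ((fun l => τ l k) '' Nbrs i k) < τ i k →
        τ i (k + 1) = τ i k + 1 ∧
        zhat i (k + 1) = A.mulVec (zhat i k) + w i k))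
    -- hypothesis: at time k ∈ ℕ₊, node i ≠ j has finite freshness-index m ∈ ℕ₊
    (i : Fin N) (hij : i ≠ j) (k m : ℕ) (hk : 0 < k) (hm : 0 < m)
    (hτ : τ i k = (m : ℕ∞)) :
    ∃ v : ℕ → Fin N, v (k - m) = j ∧ v k = i ∧
      zhat i k = (A ^ m).mulVec (zhat j (k - m))
        + ∑ t ∈ Finset.Ico (k - m) k, (A ^ (k - t - 1)).mulVec (w (v (t + 1)) t) := by
  obtain ⟨s, v, hks, hvs, hvk, hz⟩ := exists_chain j A w τ zhat hsrc hinit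
    (fun i hi k => by
      by_cases hlt : sInf ((fun l => τ l k) '' Nbrs i k) < τ i k
      · obtain ⟨u, -, -, hu⟩ := (hupd i hi k).1 hlt
        exact ⟨u, hu⟩
      · exact ⟨i, (hupd i hi k).2 hlt⟩) m i k hτ
  obtain rfl : s = k - m := by omega
  exact ⟨v, hvs, hvk, hz⟩
end

section
/- Under conditions (C3) on the graph sequence, the freshness-indices satisfy: τ_i[k] ≠ ∞ (i.e., τ_i[k] is a natural number) for every node i ∈ {1,…,N} and every k ≥ t_{N−1} = Σ_{q=0}^{N−2} f(t_q). -/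
/-!
A finite index stays finite, and it is passed on along every edge `l → i` active at time `k`
(`l ∈ Nbrs i k`). Let `S q` be the set of nodes with finite index at time `t q`. It contains the
source and is increasing in `q`. If `S q` is not everything, a path of the union graph over
`[t q, t (q + 1))` from the source to a node outside must contain an edge leaving `S q`
(`exists_edge_leaving`), and its head belongs to `S (q + 1)`. Thus `S q` gains a node in every
interval until it is full, which happens by `q = N - 1`.
-/

/-- A path from a point satisfying `P` to a point not satisfying it has a step that leaves `P`. -/
lemma exists_edge_leaving {α : Type*} {r : α → α → Prop} {P : α → Prop} {a b : α}
    (h : Relation.ReflTransGen r a b) (ha : P a) (hb : ¬ P b) :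
    ∃ x y, P x ∧ ¬ P y ∧ r x y := by
  induction h with
  | refl => exact absurd ha hb
  | @tail c d _ hcd ih =>
    by_cases hc : P c
    · exact ⟨c, d, hc, hb, hcd⟩
    · exact ih hc


/-- **Triggering of freshness-indices (Lemma 3, Eq. (14))**: under condition (C3), every
node's freshness-index is finite from time `t_{N−1} = Σ_{q=0}^{N−2} f(t_q)` onwards. -/
theorem freshness_index_triggered
    {N : ℕ}
    -- communication graph sequence
    (Nbrs : Fin N → ℕ → Set (Fin N)) (hNbrs : ∀ i k, i ∉ Nbrs i k)
    -- the sequence 𝕀 = {t 0 = 0 < t 1 < t 2 < …}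
    (t : ℕ → ℕ) (ht0 : t 0 = 0) (htmono : StrictMono t)
    -- (C3): the union graph over each interval [t_q, t_{q+1}) is strongly connected
    (hC3 : ∀ q, ∀ a b : Fin N,
      Relation.ReflTransGen
        (fun l i => ∃ τ', t q ≤ τ' ∧ τ' < t (q + 1) ∧ l ∈ Nbrs i τ') a b)
    -- source node and freshness-indices
    (j : Fin N) (τ : Fin N → ℕ → ℕ∞)
    (hsrc : ∀ k, τ j k = 0)
    (hinit : ∀ i : Fin N, i ≠ j → τ i 0 = ⊤)
    (hupd : ∀ i : Fin N, i ≠ j → ∀ k,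
      τ i (k + 1) = 1 + min (τ i k) (sInf ((fun l => τ l k) '' Nbrs i k))) :
    ∀ (i : Fin N) (k : ℕ), (∑ q ∈ Finset.range (N - 1), (t (q + 1) - t q)) ≤ k →
      τ i k ≠ ⊤ := by
  have hstep : ∀ i k, τ i k ≠ ⊤ → τ i (k + 1) ≠ ⊤ := by
    intro i k h
    by_cases hi : i = j
    · subst hi; simp [hsrc]
    · rw [hupd i hi k]
      exact WithTop.add_ne_top.2 ⟨ENat.one_ne_top, ne_top_of_le_ne_top h (min_le_left _ _)⟩
  have hmono : ∀ i k m, k ≤ m → τ i k ≠ ⊤ → τ i m ≠ ⊤ := by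
    intro i k m hkm h
    induction m, hkm using Nat.le_induction with
    | base => exact h
    | succ m _ ih => exact hstep i m ih
  have hedge : ∀ l i k, l ∈ Nbrs i k → τ l k ≠ ⊤ → τ i (k + 1) ≠ ⊤ := by
    intro l i k hl h
    by_cases hi : i = j
    · subst hi; simp [hsrc]
    · rw [hupd i hi k]
      exact WithTop.add_ne_top.2 ⟨ENat.one_ne_top, ne_top_of_le_ne_top h
        ((min_le_right _ _).trans (sInf_le ⟨l, hl, rfl⟩))⟩
  have hj : ∀ k, τ j k ≠ ⊤ := fun k => by simp [hsrc]
  classical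
  let S : ℕ → Finset (Fin N) := fun q => Finset.univ.filter fun i => τ i (t q) ≠ ⊤
  have hS : ∀ q i, i ∈ S q ↔ τ i (t q) ≠ ⊤ := fun q i => by simp [S]
  have hcard : ∀ q, S q = Finset.univ ∨ q + 1 ≤ (S q).card := by
    intro q
    induction q with
    | zero => exact Or.inr (Finset.card_pos.2 ⟨j, (hS 0 j).2 (hj _)⟩)
    | succ q ih =>
      have hsub : S q ⊆ S (q + 1) := fun i hi =>
        (hS _ i).2 (hmono i _ _ (htmono q.lt_succ_self).le ((hS _ i).1 hi))
      rcases ih with h | h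
      · exact Or.inl (Finset.univ_subset_iff.1 (h ▸ hsub))
      · by_cases hfull : S q = Finset.univ
        · exact Or.inl (Finset.univ_subset_iff.1 (hfull ▸ hsub))
        · right
          obtain ⟨b, hb⟩ : ∃ b, b ∉ S q := by
            by_contra! hall
            exact hfull (Finset.eq_univ_iff_forall.2 hall)
          obtain ⟨x, y, hx, hy, s, hs1, hs2, hxy⟩ :=
            exists_edge_leaving (P := fun i => i ∈ S q) (hC3 q j b) ((hS q j).2 (hj _)) hb
          have hy' : y ∈ S (q + 1) := (hS _ y).2
            (hmono y (s + 1) _ hs2 (hedge x y s hxy (hmono x _ s hs1 ((hS q x).1 hx))))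
          have := Finset.card_lt_card (Finset.ssubset_iff_subset_ne.2
            ⟨hsub, fun e => hy (e ▸ hy')⟩)
          omega
  intro i k hk
  rw [Finset.sum_range_tsub htmono.monotone, ht0, Nat.sub_zero] at hk
  have hN : S (N - 1) = Finset.univ := by
    rcases hcard (N - 1) with h | h
    · exact h
    · refine Finset.eq_univ_of_card _ (le_antisymm (Finset.card_le_univ _) ?_)
      rw [Fintype.card_fin]
      omega
  exact hmono i _ k hk ((hS _ i).1 (hN ▸ Finset.mem_univ i))
end

section
/- Under conditions (C3) on the graph sequence, the freshness-indices satisfy: for every p ∈ ℕ_+ and every node i ∈ {1,…,N}, τ_i[t_{p(N−1)}] ≤ Σ_{q=(p−1)(N−1)}^{p(N−1)−1} f(t_q). -/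
/-!
Put `s = t ((p - 1) * (N - 1))` and call a node *informed* at time `k ≥ s` if its
freshness-index at `k` is at most `k - s`, i.e. if its information left the source no earlier
than `s`. The source is always informed, informed nodes stay informed, and an in-neighbor that
is informed at time `k` makes its receiver informed at time `k + 1`. By strong connectivity of
the union graph, in every interval `[t q, t (q + 1))` some edge leaves the set of nodes informed
at `t q`, unless that set is everything; hence the number of informed nodes grows by at least
one per interval (`min_le_card_informed`). After `N - 1` intervals all nodes are informed, and
the sum of interval lengths telescopes to the bound.
-/

/-- A path leading out of `P` contains an edge leaving `P`. -/
theorem exists_crossing {α : Type*} {r : α → α → Prop} {P : α → Prop} {a b : α}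
    (h : Relation.ReflTransGen r a b) (ha : P a) (hb : ¬ P b) :
    ∃ l i, r l i ∧ P l ∧ ¬ P i := by
  induction h with
  | refl => exact absurd ha hb
  | @tail c d _ hcd ih =>
    by_cases hc : P c
    · exact ⟨c, d, hcd, hc, hb⟩
    · exact ih hc

theorem sum_Ico_sub_of_monotone {t : ℕ → ℕ} (ht : Monotone t) {a b : ℕ} (hab : a ≤ b) :
    ∑ q ∈ Finset.Ico a b, (t (q + 1) - t q) = t b - t a := by
  induction b, hab using Nat.le_induction with
  | base => simp
  | succ n hn ih =>
    have h1 := ht hn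
    have h2 := ht (Nat.le_succ n)
    rw [Finset.sum_Ico_succ_top hn, ih]
    simp only [Nat.succ_eq_add_one] at h2
    omega

/-- At time `k`, the information held by the node with freshness-index `x` is no older than the
time `s`. The subtraction is truncated, so this is meaningful for `s ≤ k` only. -/
def Informed (s : ℕ) (x : ℕ∞) (k : ℕ) : Prop := x ≤ ((k - s : ℕ) : ℕ∞)

section

variable {N : ℕ} {Nbrs : Fin N → ℕ → Set (Fin N)} {j : Fin N} {τ : Fin N → ℕ → ℕ∞}

theorem informed_succ
    (hsrc : ∀ k, τ j k = 0)
    (hupd : ∀ i : Fin N, i ≠ j → ∀ k,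
      τ i (k + 1) = 1 + min (τ i k) (sInf ((fun l => τ l k) '' Nbrs i k)))
    {s k : ℕ} (hk : s ≤ k) {l i : Fin N} (hl : Informed s (τ l k) k)
    (h : l = i ∨ l ∈ Nbrs i k) : Informed s (τ i (k + 1)) (k + 1) := by
  unfold Informed at *
  by_cases hij : i = j
  · subst hij
    simp [hsrc]
  · have hm : min (τ i k) (sInf ((fun l => τ l k) '' Nbrs i k)) ≤ τ l k := by
      rcases h with rfl | h
      · exact min_le_left _ _
      · exact (min_le_right _ _).trans (sInf_le ⟨l, h, rfl⟩)
    rw [hupd i hij, show k + 1 - s = 1 + (k - s) by omega]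
    push_cast
    exact add_le_add le_rfl (hm.trans (by simpa using hl))

theorem informed_mono
    (hsrc : ∀ k, τ j k = 0)
    (hupd : ∀ i : Fin N, i ≠ j → ∀ k,
      τ i (k + 1) = 1 + min (τ i k) (sInf ((fun l => τ l k) '' Nbrs i k)))
    {s k k' : ℕ} (hk : s ≤ k) (hkk' : k ≤ k') {i : Fin N} (hi : Informed s (τ i k) k) :
    Informed s (τ i k') k' := by
  induction k', hkk' using Nat.le_induction with
  | base => exact hi
  | succ m hm ih => exact informed_succ hsrc hupd (hk.trans hm) ih (Or.inl rfl)

open Classical in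
/-- Each of the `n` intervals starting at `t a` informs at least one new node, as long as some
node is left to inform. -/
theorem min_le_card_informed
    {t : ℕ → ℕ} (ht : StrictMono t)
    (hC3 : ∀ q, ∀ a b : Fin N,
      Relation.ReflTransGen
        (fun l i => ∃ τ', t q ≤ τ' ∧ τ' < t (q + 1) ∧ l ∈ Nbrs i τ') a b)
    (hsrc : ∀ k, τ j k = 0)
    (hupd : ∀ i : Fin N, i ≠ j → ∀ k,
      τ i (k + 1) = 1 + min (τ i k) (sInf ((fun l => τ l k) '' Nbrs i k)))
    (a n : ℕ) :
    min N (n + 1) ≤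
      (Finset.univ.filter fun i => Informed (t a) (τ i (t (a + n))) (t (a + n))).card := by
  have hj : ∀ k, Informed (t a) (τ j k) k := fun k => by simp [Informed, hsrc]
  induction n with
  | zero =>
    refine (min_le_right _ _).trans (Finset.card_pos.mpr ⟨j, ?_⟩)
    simpa using hj _
  | succ n ih =>
    have han : t a ≤ t (a + n) := ht.monotone (Nat.le_add_right a n)
    have hstep : t (a + n) ≤ t (a + (n + 1)) := ht.monotone (by omega)
    have hsub : (Finset.univ.filter fun i => Informed (t a) (τ i (t (a + n))) (t (a + n))) ⊆
        Finset.univ.filter fun i =>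
          Informed (t a) (τ i (t (a + (n + 1)))) (t (a + (n + 1))) := by
      intro i hi
      simp only [Finset.mem_filter, Finset.mem_univ, true_and] at hi ⊢
      exact informed_mono hsrc hupd han hstep hi
    by_cases hall : ∀ b, Informed (t a) (τ b (t (a + n))) (t (a + n))
    · rw [Finset.filter_true_of_mem fun i _ => hall i] at hsub
      have := Finset.card_le_card hsub
      rw [Finset.card_univ, Fintype.card_fin] at this
      exact (min_le_left _ _).trans this
    · push Not at hall
      obtain ⟨b, hb⟩ := hall
      obtain ⟨l, i, ⟨k, hk1, hk2, hli⟩, hl, hi⟩ :=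
        exists_crossing (P := fun i => Informed (t a) (τ i (t (a + n))) (t (a + n)))
          (hC3 (a + n) j b) (hj _) hb
      have hi' : Informed (t a) (τ i (t (a + (n + 1)))) (t (a + (n + 1))) :=
        informed_mono hsrc hupd (by omega) hk2
          (informed_succ hsrc hupd (han.trans hk1)
            (informed_mono hsrc hupd han hk1 hl) (Or.inr hli))
      have hlt := Finset.card_lt_card (Finset.ssubset_iff_subset_ne.mpr ⟨hsub, fun heq => hi (by
        have : i ∈ Finset.univ.filter fun i =>
            Informed (t a) (τ i (t (a + (n + 1)))) (t (a + (n + 1))) := by simpa using hi'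
        rw [← heq] at this
        simpa using this)⟩)
      omega

end


/-- **Delay bound along 𝕀 (Lemma 3, Eq. (15))**: under condition (C3), for every `p ∈ ℕ₊`
the freshness-index of every node at time `t_{p(N−1)}` is at most
`Σ_{q=(p−1)(N−1)}^{p(N−1)−1} f(t_q)`. -/
theorem freshness_index_delay_bound
    {N : ℕ}
    -- communication graph sequence
    (Nbrs : Fin N → ℕ → Set (Fin N)) (hNbrs : ∀ i k, i ∉ Nbrs i k)
    -- the sequence 𝕀 = {t 0 = 0 < t 1 < t 2 < …}
    (t : ℕ → ℕ) (ht0 : t 0 = 0) (htmono : StrictMono t)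
    -- (C3): the union graph over each interval [t_q, t_{q+1}) is strongly connected
    (hC3 : ∀ q, ∀ a b : Fin N,
      Relation.ReflTransGen
        (fun l i => ∃ τ', t q ≤ τ' ∧ τ' < t (q + 1) ∧ l ∈ Nbrs i τ') a b)
    -- source node and freshness-indices
    (j : Fin N) (τ : Fin N → ℕ → ℕ∞)
    (hsrc : ∀ k, τ j k = 0)
    (hinit : ∀ i : Fin N, i ≠ j → τ i 0 = ⊤)
    (hupd : ∀ i : Fin N, i ≠ j → ∀ k,
      τ i (k + 1) = 1 + min (τ i k) (sInf ((fun l => τ l k) '' Nbrs i k))) :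
    ∀ (p : ℕ), 0 < p → ∀ i : Fin N,
      τ i (t (p * (N - 1))) ≤
        ((∑ q ∈ Finset.Ico ((p - 1) * (N - 1)) (p * (N - 1)), (t (q + 1) - t q) : ℕ) : ℕ∞) := by
  classical
  intro p hp i
  have hN : 0 < N := i.pos
  have hsplit : p * (N - 1) = (p - 1) * (N - 1) + (N - 1) := by
    obtain ⟨m, rfl⟩ : ∃ m, p = m + 1 := ⟨p - 1, by omega⟩
    simp [Nat.succ_mul]
  have hcard := min_le_card_informed htmono hC3 hsrc hupd ((p - 1) * (N - 1)) (N - 1)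
  rw [Nat.sub_add_cancel hN, min_self, ← hsplit] at hcard
  have huniv := (Finset.card_eq_iff_eq_univ _).mp
    ((Finset.card_le_univ _).antisymm ((Fintype.card_fin N).trans_le hcard))
  have hi := (Finset.mem_filter.mp (Finset.eq_univ_iff_forall.mp huniv i)).2
  rw [sum_Ico_sub_of_monotone htmono.monotone (by omega)]
  exact hi
end

section
/- Assume additionally that f(t_q) is nondecreasing in q (condition (C1)), and define m(k) := max{t_q ∈ 𝕀 : t_q ≤ k} and g(k) := f(m(k)). Then for every node i ∈ {1,…,N} and every k ≥ t_{N−1}, the freshness-index satisfies τ_i[k] ≤ 2(N−1) g(k). -/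
section Freshness

variable {N : ℕ} {Nbrs : Fin N → ℕ → Set (Fin N)} {t : ℕ → ℕ} {j : Fin N} {τ : Fin N → ℕ → ℕ∞}

lemma index_le_of_le (hsrc : ∀ k, τ j k = 0)
    (hupd : ∀ i : Fin N, i ≠ j → ∀ k,
      τ i (k + 1) = 1 + min (τ i k) (sInf ((fun l => τ l k) '' Nbrs i k)))
    {s k k' : ℕ} (hs : s ≤ k) (hk : k ≤ k') {i : Fin N}
    (hi : τ i k ≤ ((k - s : ℕ) : ℕ∞)) : τ i k' ≤ ((k' - s : ℕ) : ℕ∞) := by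
  induction k', hk using Nat.le_induction with
  | base => exact hi
  | succ n hn ih =>
    by_cases hij : i = j
    · simp [hij, hsrc]
    · rw [hupd i hij, show n + 1 - s = 1 + (n - s) by omega, Nat.cast_add, Nat.cast_one]
      gcongr
      exact (min_le_left _ _).trans ih

lemma index_le_of_mem (hsrc : ∀ k, τ j k = 0)
    (hupd : ∀ i : Fin N, i ≠ j → ∀ k,
      τ i (k + 1) = 1 + min (τ i k) (sInf ((fun l => τ l k) '' Nbrs i k)))
    {s k : ℕ} (hs : s ≤ k) {l i : Fin N} (hl : l ∈ Nbrs i k)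
    (h : τ l k ≤ ((k - s : ℕ) : ℕ∞)) : τ i (k + 1) ≤ ((k + 1 - s : ℕ) : ℕ∞) := by
  by_cases hij : i = j
  · simp [hij, hsrc]
  · rw [hupd i hij, show k + 1 - s = 1 + (k - s) by omega, Nat.cast_add, Nat.cast_one]
    gcongr
    exact (min_le_right _ _).trans ((sInf_le (Set.mem_image_of_mem _ hl)).trans h)

open scoped Classical in
/-- The nodes informed at time `k` relative to the start time `s`: those holding information that
left the source at time `s` or later. The subtraction truncates, so this is meant for `s ≤ k`. -/
noncomputable def informed (τ : Fin N → ℕ → ℕ∞) (s k : ℕ) : Finset (Fin N) :=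
  Finset.univ.filter fun i => τ i k ≤ ((k - s : ℕ) : ℕ∞)

lemma mem_informed {s k : ℕ} {i : Fin N} :
    i ∈ informed τ s k ↔ τ i k ≤ ((k - s : ℕ) : ℕ∞) := by
  simp only [informed, Finset.mem_filter, Finset.mem_univ, true_and]

/-- The informed set grows by at least one node per window, until it is everything. -/
lemma card_informed (htmono : StrictMono t)
    (hC3 : ∀ q, ∀ a b : Fin N,
      Relation.ReflTransGen
        (fun l i => ∃ τ', t q ≤ τ' ∧ τ' < t (q + 1) ∧ l ∈ Nbrs i τ') a b)
    (hsrc : ∀ k, τ j k = 0)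
    (hupd : ∀ i : Fin N, i ≠ j → ∀ k,
      τ i (k + 1) = 1 + min (τ i k) (sInf ((fun l => τ l k) '' Nbrs i k)))
    (p n : ℕ) : min N (n + 1) ≤ (informed τ (t p) (t (p + n))).card := by
  have hj : ∀ k, j ∈ informed τ (t p) k := fun k => by simp [mem_informed, hsrc]
  induction n with
  | zero => exact (min_le_right _ _).trans (Finset.card_pos.2 ⟨j, hj _⟩)
  | succ n ih =>
    have hpq : t p ≤ t (p + n) := htmono.monotone (by omega)
    have hqq : t (p + n) ≤ t (p + (n + 1)) := htmono.monotone (by omega)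
    have hsub : informed τ (t p) (t (p + n)) ⊆ informed τ (t p) (t (p + (n + 1))) :=
      fun i hi => mem_informed.2 (index_le_of_le hsrc hupd hpq hqq (mem_informed.1 hi))
    rcases hsub.eq_or_ssubset with heq | hss
    · have hall : informed τ (t p) (t (p + n)) = Finset.univ := by
        refine Finset.eq_univ_iff_forall.2 fun b => ?_
        induction hC3 (p + n) j b with
        | refl => exact hj _
        | @tail l i _ hli hl =>
          obtain ⟨k, hk1, hk2, hmem⟩ := hli
          rw [heq, mem_informed]
          have h1 := index_le_of_le hsrc hupd hpq hk1 (mem_informed.1 hl)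
          exact index_le_of_le hsrc hupd (by omega) (Nat.succ_le_of_lt hk2)
            (index_le_of_mem hsrc hupd (hpq.trans hk1) hmem h1)
      rw [← heq, hall, Finset.card_univ, Fintype.card_fin]
      exact min_le_left _ _
    · have := Finset.card_lt_card hss
      omega

lemma index_le_sub (htmono : StrictMono t)
    (hC3 : ∀ q, ∀ a b : Fin N,
      Relation.ReflTransGen
        (fun l i => ∃ τ', t q ≤ τ' ∧ τ' < t (q + 1) ∧ l ∈ Nbrs i τ') a b)
    (hsrc : ∀ k, τ j k = 0)
    (hupd : ∀ i : Fin N, i ≠ j → ∀ k,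
      τ i (k + 1) = 1 + min (τ i k) (sInf ((fun l => τ l k) '' Nbrs i k)))
    {p k : ℕ} (hk : t (p + (N - 1)) ≤ k) (i : Fin N) :
    τ i k ≤ ((k - t p : ℕ) : ℕ∞) := by
  refine index_le_of_le hsrc hupd (htmono.monotone (Nat.le_add_right p (N - 1))) hk ?_
  have hcard := card_informed htmono hC3 hsrc hupd p (N - 1)
  have huniv : informed τ (t p) (t (p + (N - 1))) = Finset.univ := by
    rw [← Finset.card_eq_iff_eq_univ, Fintype.card_fin]
    have := Finset.card_le_univ (informed τ (t p) (t (p + (N - 1))))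
    rw [Fintype.card_fin] at this
    omega
  exact mem_informed.1 (huniv ▸ Finset.mem_univ i)

end Freshness

/-- Under (C1), the `m` windows preceding `t (a + m)` are each at most as long as the next one. -/
lemma le_add_mul_gap {t : ℕ → ℕ} (htmono : StrictMono t)
    (hC1 : ∀ q, t (q + 1) - t q ≤ t (q + 2) - t (q + 1)) (a m : ℕ) :
    t (a + m) ≤ t a + m * (t (a + m + 1) - t (a + m)) := by
  induction m with
  | zero => simp
  | succ m ih =>
    have h1 := hC1 (a + m)
    have h2 : t (a + m) ≤ t (a + m + 1) := htmono.monotone (Nat.le_succ (a + m))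
    have h3 := Nat.mul_le_mul_left (m + 1) h1
    rw [Nat.add_mul m 1 (t (a + m + 1) - t (a + m))] at h3
    change t (a + m + 1) ≤ t a + (m + 1) * (t (a + m + 2) - t (a + m + 1))
    omega

lemma lastIdx_spec {t : ℕ → ℕ} (ht0 : t 0 = 0) (k : ℕ) : t (lastIdx t k) ≤ k :=
  Nat.findGreatest_spec (P := fun q => t q ≤ k) (Nat.zero_le k) (by simp [ht0])

lemma lt_lastIdx_succ {t : ℕ → ℕ} (htmono : StrictMono t) (k : ℕ) : k < t (lastIdx t k + 1) := by
  by_contra! h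
  -- The search bound `k` in `lastIdx` loses nothing, since `q ≤ t q`.
  have h1 : lastIdx t k + 1 ≤ k := (htmono.le_apply).trans h
  exact Nat.findGreatest_is_greatest (P := fun q => t q ≤ k) (Nat.lt_succ_self _) h1 h

/-- **Uniform delay bound (Eq. (20))**: under conditions (C1) and (C3), for every node `i`
and every `k ≥ t_{N−1}`, the freshness-index satisfies `τ_i[k] ≤ 2(N−1) g(k)`. -/
theorem freshness_index_uniform_bound
    {N : ℕ}
    -- communication graph sequence
    (Nbrs : Fin N → ℕ → Set (Fin N)) (hNbrs : ∀ i k, i ∉ Nbrs i k)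
    -- the sequence 𝕀 = {t 0 = 0 < t 1 < t 2 < …}
    (t : ℕ → ℕ) (ht0 : t 0 = 0) (htmono : StrictMono t)
    -- (C1): f(t_q) := t_{q+1} − t_q is nondecreasing in q
    (hC1 : ∀ q, t (q + 1) - t q ≤ t (q + 2) - t (q + 1))
    -- (C3): the union graph over each interval [t_q, t_{q+1}) is strongly connected
    (hC3 : ∀ q, ∀ a b : Fin N,
      Relation.ReflTransGen
        (fun l i => ∃ τ', t q ≤ τ' ∧ τ' < t (q + 1) ∧ l ∈ Nbrs i τ') a b)
    -- source node and freshness-indices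
    (j : Fin N) (τ : Fin N → ℕ → ℕ∞)
    (hsrc : ∀ k, τ j k = 0)
    (hinit : ∀ i : Fin N, i ≠ j → τ i 0 = ⊤)
    (hupd : ∀ i : Fin N, i ≠ j → ∀ k,
      τ i (k + 1) = 1 + min (τ i k) (sInf ((fun l => τ l k) '' Nbrs i k))) :
    ∀ (i : Fin N) (k : ℕ), t (N - 1) ≤ k →
      τ i k ≤ ((2 * (N - 1) * gfun t k : ℕ) : ℕ∞) := by
  intro i k hk
  by_cases hN : N ≤ 1
  · have hij : i = j := by ext; omega
    simp [hij, hsrc]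
  have hq : N - 1 ≤ lastIdx t k :=
    Nat.le_findGreatest (P := fun q => t q ≤ k) ((htmono.le_apply).trans hk) hk
  obtain ⟨p, hp⟩ := Nat.exists_eq_add_of_le' hq
  have h1 := lastIdx_spec ht0 k
  have h2 := lt_lastIdx_succ htmono k
  have h3 := le_add_mul_gap htmono hC1 p (N - 1)
  refine (index_le_sub htmono hC3 hsrc hupd (p := p) (hp ▸ h1) i).trans (Nat.cast_le.2 ?_)
  rw [← hp] at h3
  change t (lastIdx t k) ≤ t p + (N - 1) * gfun t k at h3
  have h4 : k < t (lastIdx t k) + gfun t k := by unfold gfun; omega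
  have h5 : gfun t k ≤ (N - 1) * gfun t k := Nat.le_mul_of_pos_left _ (by omega)
  rw [mul_assoc]
  omega
end

section
/- Consider the scalar system x[k+1] = a x[k] + d with a > 1 and d > 0, let c_1 ≠ 0 and y_1[k] = c_1 x[k], and let node 1 run the Luenberger observer x̂_1[k+1] = a x̂_1[k] + l_1 (y_1[k] − c_1 x̂_1[k]) with gain l_1 chosen so that a − l_1 c_1 = 0. Let 𝕀 = {t_0 = 0 < t_1 < t_2 < …} ⊆ ℕ be an increasing sequence with f(t_q) := t_{q+1} − t_q, and let node 2 set x̂_2[t_{q+1}] = a^{f(t_q)} x̂_1[t_q] for each q. Write e_i[k] := x[k] − x̂_i[k]. Then: (i) e_1[k] = d for all k ≥ 1; (ii) e_2[t_{q+1}] = a^{f(t_q)} d + d (a^{f(t_q)} − 1)/(a − 1) for every q ≥ 1; and (iii) if f(t_q) → ∞ as q → ∞, then e_2[t_q] → ∞ as q → ∞, i.e., the error subsequence (e_2[t_q]) is unbounded. -/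
/-! The dead-beat gain `a = l₁ c₁` cancels the error of node 1 in one step, leaving only the
drift `d`; this is (i). Iterating the affine recursion for `n` steps gives
`x[m+n] = aⁿ x[m] + d (aⁿ - 1)/(a - 1)` (`affine_iterate`), and subtracting `aⁿ x̂₁[m]` with
`m = t_q`, `n = f(t_q)` gives (ii), since `m ≥ 1` as soon as `q ≥ 1`. In (ii) the last summand is
nonnegative, so `e₂[t_{q+1}] ≥ a^{f(t_q)} d`, which tends to infinity when `f(t_q)` does. -/

lemma affine_iterate {a d : ℝ} (ha : 1 < a) {x : ℕ → ℝ}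
    (hx : ∀ k, x (k + 1) = a * x k + d) (m n : ℕ) :
    x (m + n) = a ^ n * x m + d * (a ^ n - 1) / (a - 1) := by
  have h : a - 1 ≠ 0 := by linarith
  induction n with
  | zero => simp
  | succ n ih =>
    rw [← add_assoc, hx, ih]
    field_simp
    ring

/-- **Unbounded errors under growing inter-communication intervals (Section V-B)**:
for the scalar system `x[k+1] = a x[k] + d` with `a > 1`, `d > 0`, a dead-beat Luenberger
observer at node 1 (`a − l₁ c₁ = 0`), and node 2 setting
`x̂₂[t_{q+1}] = a^{f(t_q)} x̂₁[t_q]`, the errors satisfy (i) `e₁[k] = d` for `k ≥ 1`,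
(ii) `e₂[t_{q+1}] = a^{f(t_q)} d + d (a^{f(t_q)} − 1)/(a − 1)` for `q ≥ 1`, and
(iii) if `f(t_q) → ∞` then `e₂[t_q] → ∞`. -/
theorem unbounded_error_growing_intervals
    (a d c₁ l₁ : ℝ) (ha : 1 < a) (hd : 0 < d) (hc₁ : c₁ ≠ 0)
    (hgain : a - l₁ * c₁ = 0)
    -- system dynamics
    (x : ℕ → ℝ) (hx : ∀ k, x (k + 1) = a * x k + d)
    -- node 1: Luenberger observer with measurements y₁[k] = c₁ x[k]
    (x1 : ℕ → ℝ) (hx1 : ∀ k, x1 (k + 1) = a * x1 k + l₁ * (c₁ * x k - c₁ * x1 k))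
    -- the sequence 𝕀 = {t 0 = 0 < t 1 < t 2 < …}
    (t : ℕ → ℕ) (ht0 : t 0 = 0) (htmono : StrictMono t)
    -- node 2: adopts node 1's estimate at the communication times and runs open loop
    (x2 : ℕ → ℝ) (hx2 : ∀ q : ℕ, x2 (t (q + 1)) = a ^ (t (q + 1) - t q) * x1 (t q)) :
    -- (i)
    (∀ k : ℕ, 1 ≤ k → x k - x1 k = d) ∧
    -- (ii)
    (∀ q : ℕ, 1 ≤ q →
      x (t (q + 1)) - x2 (t (q + 1)) =
        a ^ (t (q + 1) - t q) * d + d * (a ^ (t (q + 1) - t q) - 1) / (a - 1)) ∧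
    -- (iii)
    (Filter.Tendsto (fun q : ℕ => (t (q + 1) - t q : ℕ)) Filter.atTop Filter.atTop →
      Filter.Tendsto (fun q : ℕ => x (t q) - x2 (t q)) Filter.atTop Filter.atTop) := by
  have h₁ : ∀ k : ℕ, 1 ≤ k → x k - x1 k = d := by
    intro k hk
    obtain ⟨j, rfl⟩ := Nat.exists_eq_add_of_le' hk
    rw [hx, hx1]
    linear_combination (x j - x1 j) * hgain
  have h₂ : ∀ q : ℕ, 1 ≤ q →
      x (t (q + 1)) - x2 (t (q + 1)) =
        a ^ (t (q + 1) - t q) * d + d * (a ^ (t (q + 1) - t q) - 1) / (a - 1) := by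
    intro q hq
    have hlt : t q < t (q + 1) := htmono q.lt_succ_self
    have hit := affine_iterate ha hx (t q) (t (q + 1) - t q)
    rw [Nat.add_sub_cancel' hlt.le] at hit
    rw [hx2, hit]
    linear_combination a ^ (t (q + 1) - t q) * h₁ (t q) (hq.trans (htmono.le_apply))
  refine ⟨h₁, h₂, fun hf => ?_⟩
  rw [← Filter.tendsto_add_atTop_iff_nat 1]
  have hlim : Filter.Tendsto (fun q : ℕ => a ^ (t (q + 1) - t q) * d)
      Filter.atTop Filter.atTop :=
    ((tendsto_pow_atTop_atTop_of_one_lt ha).comp hf).atTop_mul_const hd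
  refine Filter.tendsto_atTop_mono' _ ?_ hlim
  filter_upwards [Filter.eventually_ge_atTop 1] with q hq
  rw [h₂ q hq]
  have hpow : 1 ≤ a ^ (t (q + 1) - t q) := one_le_pow₀ ha.le
  have hnn : 0 ≤ d * (a ^ (t (q + 1) - t q) - 1) / (a - 1) :=
    div_nonneg (mul_nonneg hd.le (sub_nonneg.2 hpow)) (sub_nonneg.2 ha.le)
  linarith
end

section
/- Let f ∈ ℕ, let x : {1,…,2f+1} → ℝ be a finite family of real numbers, and let R ⊆ {1,…,2f+1} with |{1,…,2f+1} \ R| ≤ f. Let x̄ be the value obtained by sorting the 2f+1 values x_1,…,x_{2f+1} and discarding the largest f and the smallest f of them (i.e., x̄ is the (f+1)-th smallest value, counted with multiplicity). Then min_{l ∈ R} x_l ≤ x̄ ≤ max_{l ∈ R} x_l; in particular, x̄ lies in the convex hull of { x_l : l ∈ R }. -/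
/-!
The sorted position `f` is the median, so each of the position intervals `Iic f` and `Ici f` has
`f + 1` elements. As at most `f` indices lie outside `R`, each interval contains a position occupied
by an index of `R`; monotonicity compares that value with the median, and the segment
joining the two regular values found this way contains the median.
-/

/-- Pigeonhole: more than `f` sorted positions cannot all be occupied by indices outside `R`. -/
lemma exists_mem_of_card_compl_le {n f : ℕ} (R : Finset (Fin n))
    (hR : (Finset.univ \ R).card ≤ f) (σ : Equiv.Perm (Fin n))
    (S : Finset (Fin n)) (hS : f < S.card) : ∃ i ∈ S, σ i ∈ R := by
  by_contra! h
  have hsub : S.map σ.toEmbedding ⊆ Finset.univ \ R := by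
    intro j hj
    obtain ⟨i, hi, rfl⟩ := Finset.mem_map.1 hj
    simpa using h i hi
  have hcard := Finset.card_le_card hsub
  rw [Finset.card_map] at hcard
  omega

/-- **The trimming (filtering) step**: given `2f+1` values of which at most `f` are from
adversarial nodes (indices outside `R`), the value remaining after discarding the `f`
largest and `f` smallest values — i.e. the `(f+1)`-th smallest value, counted with
multiplicity, obtained through any sorting permutation `σ` — lies between the smallest
and largest regular values, and hence in the convex hull of the regular values. -/
theorem trimming_in_convex_hull
    (f : ℕ) (x : Fin (2 * f + 1) → ℝ)
    (R : Finset (Fin (2 * f + 1)))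
    (hR : (Finset.univ \ R).card ≤ f)
    (σ : Equiv.Perm (Fin (2 * f + 1))) (hσ : Monotone (x ∘ σ)) :
    (∃ l ∈ R, x l ≤ x (σ ⟨f, by omega⟩)) ∧
    (∃ l ∈ R, x (σ ⟨f, by omega⟩) ≤ x l) ∧
    x (σ ⟨f, by omega⟩) ∈ convexHull ℝ (x '' (R : Set (Fin (2 * f + 1)))) := by
  obtain ⟨i, hi, hiR⟩ := exists_mem_of_card_compl_le R hR σ (Finset.Iic ⟨f, by omega⟩)
    (by rw [Fin.card_Iic]; simp)
  obtain ⟨j, hj, hjR⟩ := exists_mem_of_card_compl_le R hR σ (Finset.Ici ⟨f, by omega⟩)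
    (by rw [Fin.card_Ici]; simp only []; omega)
  have hlo : x (σ i) ≤ x (σ ⟨f, by omega⟩) := hσ (Finset.mem_Iic.1 hi)
  have hhi : x (σ ⟨f, by omega⟩) ≤ x (σ j) := hσ (Finset.mem_Ici.1 hj)
  refine ⟨⟨_, hiR, hlo⟩, ⟨_, hjR, hhi⟩, ?_⟩
  refine segment_subset_convexHull (Set.mem_image_of_mem x (Finset.mem_coe.2 hiR))
    (Set.mem_image_of_mem x (Finset.mem_coe.2 hjR)) ?_
  rw [segment_eq_Icc (hlo.trans hhi)]
  exact ⟨hlo, hhi⟩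
end
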